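/- arXiv:1603.01956 — 20 statements merged into one kernel-verified Lean document; each statement's English description precedes it below -/
import Mathlib

section
/- Let S be a bounded nonempty subset of a Minkowski space with rad(S) ≤ 1. Then rad(bh₁(S)) = rad(S). In particular, bh₁(S) is b-bounded whenever S is b-bounded. -/
open Metric Set

/-- The ball hull of `S`: intersection of all closed balls of radius 1 containing `S`. -/
def ballHull {E : Type*} [NormedAddCommGroup E] (S : Set E) : Set E :=
  ⋂ x ∈ {x : E | S ⊆ closedBall x 1}, closedBall x 1

/-- The circumradius of `S`: the least `r ≥ 0` such that `S` is contained in some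
closed ball of radius `r`. -/
noncomputable def circumradius {E : Type*} [NormedAddCommGroup E] (S : Set E) : ℝ :=
  sInf {r : ℝ | 0 ≤ r ∧ ∃ x : E, S ⊆ closedBall x r}

theorem aux_attain {E : Type*} [NormedAddCommGroup E] [NormedSpace ℝ E]
    [FiniteDimensional ℝ E]
    (S : Set E) (hS : S.Nonempty) (hb : Bornology.IsBounded S) :
    0 ≤ circumradius S ∧ ∃ x : E, S ⊆ closedBall x (circumradius S) := by
  have h0 : 0 ≤ circumradius S := Real.sInf_nonneg (fun r hr => hr.1)
  refine ⟨h0, ?_⟩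
  have hne : {r : ℝ | 0 ≤ r ∧ ∃ x : E, S ⊆ closedBall x r}.Nonempty := by
    obtain ⟨r, hr⟩ := hb.subset_closedBall (0 : E)
    exact ⟨max r 0, le_max_right _ _, 0, hr.trans (closedBall_subset_closedBall (le_max_left _ _))⟩
  have hseq : ∀ n : ℕ, ∃ x : E, S ⊆ closedBall x (circumradius S + 1 / ((n : ℝ) + 1)) := by
    intro n
    have hpos : (0 : ℝ) < 1 / ((n : ℝ) + 1) := Nat.one_div_pos_of_nat
    obtain ⟨r, ⟨_, x, hx⟩, hr⟩ := exists_lt_of_csInf_lt hne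
      (show sInf {r : ℝ | 0 ≤ r ∧ ∃ x : E, S ⊆ closedBall x r}
        < circumradius S + 1 / ((n : ℝ) + 1) from lt_add_of_pos_right _ hpos)
    exact ⟨x, hx.trans (closedBall_subset_closedBall hr.le)⟩
  choose u hu using hseq
  obtain ⟨s, hs⟩ := hS
  have hub : ∀ n, u n ∈ closedBall s (circumradius S + 1) := by
    intro n
    have h1 := hu n hs
    rw [mem_closedBall] at h1 ⊢
    rw [dist_comm]
    have h2 : 1 / ((n : ℝ) + 1) ≤ 1 := by
      rw [div_le_one (by positivity)]
      have : (0 : ℝ) ≤ n := Nat.cast_nonneg n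
      linarith
    linarith
  haveI : ProperSpace E := FiniteDimensional.proper_real E
  obtain ⟨a, _, φ, hφ, ha⟩ := (isCompact_closedBall s (circumradius S + 1)).tendsto_subseq hub
  refine ⟨a, fun y hy => ?_⟩
  rw [mem_closedBall]
  have hl : Filter.Tendsto (fun n => circumradius S + 1 / (((φ n : ℕ) : ℝ) + 1)) Filter.atTop
      (nhds (circumradius S + 0)) :=
    tendsto_const_nhds.add
      ((tendsto_one_div_add_atTop_nhds_zero_nat (𝕜 := ℝ)).comp hφ.tendsto_atTop)
  rw [add_zero] at hl
  exact le_of_tendsto_of_tendsto' (tendsto_const_nhds.dist ha) hl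
    (fun n => mem_closedBall.1 (hu (φ n) hy))

theorem aux_hull {E : Type*} [NormedAddCommGroup E] [NormedSpace ℝ E]
    (S : Set E) (x : E) (r : ℝ) (h0 : 0 ≤ r) (h1 : r ≤ 1) (h : S ⊆ closedBall x r) :
    ballHull S ⊆ closedBall x r := by
  intro y hy
  by_contra hc
  rw [mem_closedBall, dist_eq_norm, not_le] at hc
  have hpos : 0 < ‖y - x‖ := h0.trans_lt hc
  set c : ℝ := (1 - r) / ‖y - x‖ with hcdef
  have hc0 : 0 ≤ c := div_nonneg (by linarith) hpos.le
  have hcm : c * ‖y - x‖ = 1 - r := div_mul_cancel₀ _ hpos.ne'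
  have hz : S ⊆ closedBall (x - c • (y - x)) 1 := by
    intro s hs
    have h2 := h hs
    rw [mem_closedBall, dist_eq_norm] at h2 ⊢
    calc ‖s - (x - c • (y - x))‖ = ‖(s - x) + c • (y - x)‖ := by congr 1; abel
      _ ≤ ‖s - x‖ + ‖c • (y - x)‖ := norm_add_le _ _
      _ ≤ 1 := by rw [norm_smul, Real.norm_of_nonneg hc0, hcm]; linarith
  have h3 := mem_iInter₂.1 hy _ hz
  rw [mem_closedBall, dist_eq_norm] at h3
  have h4 : y - (x - c • (y - x)) = (1 + c) • (y - x) := by rw [add_smul, one_smul]; abel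
  rw [h4, norm_smul, Real.norm_of_nonneg (by linarith), add_mul, hcm] at h3
  linarith

theorem stmt_0 {E : Type*} [NormedAddCommGroup E] [NormedSpace ℝ E]
    [FiniteDimensional ℝ E] [Nontrivial E]
    (S : Set E) (hS : S.Nonempty) (hb : Bornology.IsBounded S)
    (hrad : circumradius S ≤ 1) :
    circumradius (ballHull S) = circumradius S ∧
      (circumradius S < 1 → circumradius (ballHull S) < 1) := by
  obtain ⟨h0, x, hx⟩ := aux_attain S hS hb
  have hh := aux_hull S x _ h0 hrad hx
  have key : circumradius (ballHull S) = circumradius S := by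
    apply le_antisymm
    · exact csInf_le ⟨0, fun r hr => hr.1⟩ ⟨h0, x, hh⟩
    · refine csInf_le_csInf ⟨0, fun r hr => hr.1⟩ ⟨_, h0, x, hh⟩ ?_
      rintro r ⟨hr, z, hz⟩
      exact ⟨hr, z, (subset_iInter₂ fun w hw => hw : S ⊆ ballHull S).trans hz⟩
  exact ⟨key, fun h => key ▸ h⟩
end

section
/- Let S be a nonempty compact subset of a Minkowski space and let x₀ be such that B(x₀, rad(S)) is a circumball of S, i.e., S ⊆ B(x₀, rad(S)). Then rad(S ∩ S(x₀, rad(S))) = rad(S); that is, the intersection of S with the boundary sphere of its circumball has the same circumradius as S. -/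
open Metric Set

/-- A b-convex body: a bounded nonempty set equal to its ball hull. -/
def IsBConvexBody {E : Type*} [NormedAddCommGroup E] (K : Set E) : Prop :=
  Bornology.IsBounded K ∧ K.Nonempty ∧ ballHull K = K

/-- `F` is an exposed b-face of `K`: `F = K ∩ S(y,1)` for some supporting sphere `S(y,1)`. -/
def IsExposedBFace {E : Type*} [NormedAddCommGroup E] (K F : Set E) : Prop :=
  ∃ y : E, K ⊆ closedBall y 1 ∧ (K ∩ sphere y 1).Nonempty ∧ F = K ∩ sphere y 1

/-- The set of b-exposed points of `K`. -/
def bExp {E : Type*} [NormedAddCommGroup E] (K : Set E) : Set E :=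
  {x : E | ∃ y : E, K ⊆ closedBall y 1 ∧ K ∩ sphere y 1 = {x}}

theorem circumradius_le_aux {E : Type*} [NormedAddCommGroup E] {S : Set E} {r : ℝ} (hr : 0 ≤ r)
    (x : E) (h : S ⊆ closedBall x r) : circumradius S ≤ r :=
  csInf_le ⟨0, fun _ h => h.1⟩ ⟨hr, x, h⟩

theorem stmt_1 {E : Type*} [NormedAddCommGroup E] [NormedSpace ℝ E]
    [FiniteDimensional ℝ E] [Nontrivial E]
    (S : Set E) (hS : S.Nonempty) (hc : IsCompact S)
    (x₀ : E) (hx₀ : S ⊆ closedBall x₀ (circumradius S)) :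
    circumradius (S ∩ sphere x₀ (circumradius S)) = circumradius S := by
  have key : ∀ z : E, ∃ y ∈ S, circumradius S ≤ dist y z := by
    intro z
    obtain ⟨y, hy, hmax⟩ := hc.exists_isMaxOn hS
      (f := fun y => dist y z) (by fun_prop)
    exact ⟨y, hy, circumradius_le_aux dist_nonneg z (fun w hw => hmax hw)⟩
  have hR0 : 0 ≤ circumradius S := Real.sInf_nonneg (fun _ h => h.1)
  generalize circumradius S = R at *
  have hle : circumradius (S ∩ sphere x₀ R) ≤ R :=
    circumradius_le_aux hR0 x₀ (inter_subset_left.trans hx₀)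
  refine le_antisymm hle (le_of_not_gt fun hlt => ?_)
  obtain ⟨r, ⟨hr0, x, hx⟩, hrR⟩ :=
    exists_lt_of_csInf_lt (s := {r : ℝ | 0 ≤ r ∧ ∃ x : E, S ∩ sphere x₀ R ⊆ closedBall x r})
      ⟨R, hR0, x₀, inter_subset_left.trans hx₀⟩ hlt
  have hK : IsCompact (S ∩ {y | R ≤ dist y x}) :=
    hc.inter_right (isClosed_le continuous_const (by fun_prop))
  have hm : ∃ m < R, ∀ y ∈ S ∩ {y | R ≤ dist y x}, dist y x₀ ≤ m := by
    rcases (S ∩ {y | R ≤ dist y x}).eq_empty_or_nonempty with h | h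
    · exact ⟨r, hrR, by simp [h]⟩
    · obtain ⟨y, hy, hmax⟩ := hK.exists_isMaxOn h (f := fun y => dist y x₀) (by fun_prop)
      refine ⟨dist y x₀, lt_of_le_of_ne (hx₀ hy.1) fun he => ?_, fun w hw => hmax hw⟩
      have h1 : dist y x ≤ r := hx ⟨hy.1, he⟩
      have h2 : R ≤ dist y x := hy.2
      linarith
  obtain ⟨m, hmR, hm⟩ := hm
  obtain ⟨t, ht0, ht1, ht⟩ : ∃ t : ℝ, 0 < t ∧ t ≤ 1 ∧ m + t * ‖x - x₀‖ < R := by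
    have hd : 0 ≤ ‖x - x₀‖ := norm_nonneg _
    have hp : 0 < ‖x - x₀‖ + 1 := by linarith
    have hq : 0 < (R - m) / (‖x - x₀‖ + 1) := div_pos (by linarith) hp
    refine ⟨min 1 ((R - m) / (‖x - x₀‖ + 1)), lt_min one_pos hq, min_le_left _ _, ?_⟩
    have h1 := min_le_right 1 ((R - m) / (‖x - x₀‖ + 1))
    have h0 := lt_min one_pos hq
    rw [le_div_iff₀ hp] at h1
    linarith
  obtain ⟨y, hyS, hy⟩ := key (x₀ + t • (x - x₀))
  have hy0 : dist y x₀ ≤ R := hx₀ hyS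
  rw [dist_eq_norm] at hy hy0
  by_cases hyK : R ≤ dist y x
  · have h1 := hm y ⟨hyS, hyK⟩
    rw [dist_eq_norm] at h1
    have h2 : ‖y - (x₀ + t • (x - x₀))‖ ≤ ‖y - x₀‖ + t * ‖x - x₀‖ := by
      have := norm_sub_le (y - x₀) (t • (x - x₀))
      rwa [norm_smul, Real.norm_of_nonneg ht0.le, sub_sub] at this
    linarith
  · rw [dist_eq_norm] at hyK
    push Not at hyK
    have h2 : ‖y - (x₀ + t • (x - x₀))‖ ≤ (1 - t) * ‖y - x₀‖ + t * ‖y - x‖ := by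
      have := norm_add_le ((1 - t) • (y - x₀)) (t • (y - x))
      rw [norm_smul, norm_smul, Real.norm_of_nonneg ht0.le,
        Real.norm_of_nonneg (by linarith : 0 ≤ 1 - t)] at this
      have he : y - (x₀ + t • (x - x₀)) = (1 - t) • (y - x₀) + t • (y - x) := by module
      rwa [he]
    nlinarith
end

section
/- Let K be a b-convex body in a Minkowski space. For every boundary point x₀ of K there exists y₀ such that K ⊆ B(y₀,1) and x₀ ∈ S(y₀,1); i.e., there is a supporting sphere of K passing through x₀. -/
open Metric Set

theorem stmt_2 {E : Type*} [NormedAddCommGroup E] [NormedSpace ℝ E]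
    [FiniteDimensional ℝ E] [Nontrivial E]
    (K : Set E) (hK : IsBConvexBody K) (x₀ : E) (hx₀ : x₀ ∈ frontier K) :
    ∃ y₀ : E, K ⊆ closedBall y₀ 1 ∧ x₀ ∈ sphere y₀ 1 := by
  obtain ⟨-, ⟨k, hk⟩, hh⟩ := hK
  have hmem : ∀ z : E, (∀ y : E, K ⊆ closedBall y 1 → dist z y ≤ 1) → z ∈ K := by
    intro z hz
    rw [← hh]
    simp only [ballHull, mem_iInter, mem_setOf_eq, mem_closedBall]
    exact hz
  have hcl : IsClosed K := by
    rw [← hh]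
    exact isClosed_biInter fun _ _ => isClosed_closedBall
  have hxK : x₀ ∈ K := hcl.frontier_subset hx₀
  have hCeq : {y : E | K ⊆ closedBall y 1} = ⋂ x ∈ K, closedBall x 1 := by
    ext y
    simp only [mem_setOf_eq, mem_iInter, mem_closedBall, subset_def]
    exact forall₂_congr fun x _ => by rw [dist_comm]
  have hCc : IsCompact {y : E | K ⊆ closedBall y 1} := by
    have := FiniteDimensional.proper ℝ E
    refine (isCompact_closedBall k 1).of_isClosed_subset ?_ ?_
    · rw [hCeq]
      exact isClosed_biInter fun _ _ => isClosed_closedBall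
    · rw [hCeq]
      exact biInter_subset_of_mem hk
  have hCn : {y : E | K ⊆ closedBall y 1}.Nonempty := by
    by_contra hne
    have hu : K = univ := by
      refine eq_univ_of_forall fun z => hmem z fun y hy => ?_
      exact absurd ⟨y, hy⟩ hne
    rw [hu, frontier_univ] at hx₀
    exact hx₀
  obtain ⟨y₀, hy₀, hmax⟩ := hCc.exists_isMaxOn hCn
    (f := fun y => dist x₀ y) (by fun_prop)
  refine ⟨y₀, hy₀, ?_⟩
  have hle : dist x₀ y₀ ≤ 1 := hy₀ hxK
  by_contra hlt
  have hlt' : dist x₀ y₀ < 1 := lt_of_le_of_ne hle hlt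
  apply hx₀.2
  rw [mem_interior_iff_mem_nhds, Metric.mem_nhds_iff]
  refine ⟨1 - dist x₀ y₀, by linarith, fun z hz => hmem z fun y hy => ?_⟩
  have h1 : dist x₀ y ≤ dist x₀ y₀ := hmax hy
  have h2 := dist_triangle z x₀ y
  have h3 := mem_ball.1 hz
  linarith
end

section
/- Let K be a b-convex body in a Minkowski space. For every point x₀ ∉ K there exists y₀ such that K ⊆ B(y₀,1), K ∩ S(y₀,1) ≠ ∅, and x₀ ∉ B(y₀,1); i.e., there is a supporting sphere of K whose ball excludes x₀. -/
open Metric Set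

theorem stmt_3 {E : Type*} [NormedAddCommGroup E] [NormedSpace ℝ E]
    [FiniteDimensional ℝ E] [Nontrivial E]
    (K : Set E) (hK : IsBConvexBody K) (x₀ : E) (hx₀ : x₀ ∉ K) :
    ∃ y₀ : E, K ⊆ closedBall y₀ 1 ∧ (K ∩ sphere y₀ 1).Nonempty ∧
      x₀ ∉ closedBall y₀ 1 := by
  obtain ⟨hb, ⟨k, hk⟩, hh⟩ := hK
  have hcl : IsClosed K := by
    rw [← hh]
    exact isClosed_biInter fun _ _ => isClosed_closedBall
  have hKc : IsCompact K := isCompact_of_isClosed_isBounded hcl hb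
  obtain ⟨y₁, hy₁, hx₁⟩ : ∃ y, K ⊆ closedBall y 1 ∧ x₀ ∉ closedBall y 1 := by
    by_contra hcon
    push Not at hcon
    apply hx₀
    rw [← hh]
    exact mem_iInter₂.2 fun y hy => hcon y hy
  have hCeq : {z : E | K ⊆ closedBall z 1} = ⋂ x ∈ K, closedBall x 1 := by
    ext z
    simp only [mem_ofPred_eq, mem_iInter₂, subset_def, mem_closedBall]
    exact forall₂_congr fun x _ => by rw [dist_comm]
  have hCc : IsCompact {z : E | K ⊆ closedBall z 1} := by
    refine (isCompact_closedBall k 1).of_isClosed_subset ?_ ?_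
    · rw [hCeq]
      exact isClosed_biInter fun _ _ => isClosed_closedBall
    · intro z hz
      have := hz hk
      rwa [mem_closedBall, dist_comm] at this
  obtain ⟨y, hy, hmax⟩ := hCc.exists_isMaxOn ⟨y₁, hy₁⟩
    (f := fun z => dist x₀ z) (by fun_prop)
  have hmax' : ∀ z, K ⊆ closedBall z 1 → dist x₀ z ≤ dist x₀ y := fun z hz => hmax hz
  have h1 : 1 < dist x₀ y := by
    have h2 := hmax' y₁ hy₁
    rw [mem_closedBall, not_le] at hx₁
    linarith
  refine ⟨y, hy, ?_, by rw [mem_closedBall, not_le]; exact h1⟩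
  obtain ⟨p, hp, hpm⟩ := hKc.exists_isMaxOn ⟨k, hk⟩ (f := fun z => dist z y) (by fun_prop)
  refine ⟨p, hp, ?_⟩
  by_contra hne
  have hlt : dist p y < 1 := lt_of_le_of_ne (hy hp) hne
  set d := dist x₀ y with hd
  set t := (1 - dist p y) / d with ht
  have hd0 : 0 < d := by linarith
  have ht0 : 0 < t := div_pos (by linarith) hd0
  have htd : t * d = 1 - dist p y := by rw [ht]; field_simp
  have hz : K ⊆ closedBall (y - t • (x₀ - y)) 1 := by
    intro q hq
    have h3 : dist q y ≤ dist p y := hpm hq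
    have h4 : dist y (y - t • (x₀ - y)) = t * d := by
      rw [dist_eq_norm, sub_sub_cancel, norm_smul, Real.norm_of_nonneg ht0.le, hd, dist_eq_norm]
    have h5 := dist_triangle q y (y - t • (x₀ - y))
    rw [mem_closedBall]
    linarith
  have h6 := hmax' _ hz
  have h7 : dist x₀ (y - t • (x₀ - y)) = (1 + t) * d := by
    have h8 : x₀ - (y - t • (x₀ - y)) = (1 + t) • (x₀ - y) := by module
    rw [dist_eq_norm, h8, norm_smul, Real.norm_of_nonneg (by linarith), hd, dist_eq_norm]
  rw [h7] at h6
  nlinarith [mul_pos ht0 hd0]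
end

section
/- Let K be a b-bounded b-convex body in a Minkowski space. Then for every point x₀ ∉ K there exists y₀ such that K ⊆ int(B(y₀,1)) and x₀ ∉ B(y₀,1). In particular, K ⊆ B(y₀,r) for some r ∈ (0,1). -/
open Metric Set

theorem stmt_4 {E : Type*} [NormedAddCommGroup E] [NormedSpace ℝ E]
    [FiniteDimensional ℝ E] [Nontrivial E]
    (K : Set E) (hK : IsBConvexBody K) (hbb : circumradius K < 1)
    (x₀ : E) (hx₀ : x₀ ∉ K) :
    ∃ y₀ : E, K ⊆ interior (closedBall y₀ 1) ∧ x₀ ∉ closedBall y₀ 1 ∧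
      ∃ r ∈ Set.Ioo (0 : ℝ) 1, K ⊆ closedBall y₀ r := by
  obtain ⟨_, _, hhull⟩ := hK
  have hy : ∃ y : E, K ⊆ closedBall y 1 ∧ 1 < dist x₀ y := by
    by_contra hcon
    push Not at hcon
    apply hx₀
    rw [← hhull]
    unfold ballHull
    simp only [mem_iInter, mem_setOf_eq]
    intro y hy
    exact mem_closedBall.2 (hcon y hy)
  obtain ⟨y, hKy, hd⟩ := hy
  have hne : {r : ℝ | 0 ≤ r ∧ ∃ x : E, K ⊆ closedBall x r}.Nonempty :=
    ⟨1, zero_le_one, y, hKy⟩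
  obtain ⟨s, ⟨hs0, z, hKz⟩, hs1⟩ := exists_lt_of_csInf_lt hne hbb
  obtain ⟨t, ht0, ht1, htd⟩ : ∃ t : ℝ, 0 < t ∧ t < 1 ∧ t * dist y z < dist x₀ y - 1 := by
    have hD : 0 ≤ dist y z := dist_nonneg
    refine ⟨(dist x₀ y - 1) / (dist x₀ y + dist y z), ?_, ?_, ?_⟩
    · apply div_pos <;> linarith
    · rw [div_lt_one] <;> linarith
    · rw [div_mul_eq_mul_div, div_lt_iff₀ (by linarith)]
      nlinarith
  have hr1 : (1 - t) + t * s < 1 := by nlinarith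
  have hr0 : 0 < (1 - t) + t * s := by nlinarith
  have hsub : K ⊆ closedBall ((1 - t) • y + t • z) ((1 - t) + t * s) := by
    intro x hx
    have h1 := hKy hx
    have h2 := hKz hx
    rw [mem_closedBall, dist_eq_norm] at *
    have he : x - ((1 - t) • y + t • z) = (1 - t) • (x - y) + t • (x - z) := by
      module
    rw [he]
    refine (norm_add_le _ _).trans ?_
    rw [norm_smul, norm_smul, Real.norm_of_nonneg ht0.le,
      Real.norm_of_nonneg (by linarith : (0:ℝ) ≤ 1 - t)]
    nlinarith
  refine ⟨(1 - t) • y + t • z, ?_, ?_, _, ⟨hr0, hr1⟩, hsub⟩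
  · exact (hsub.trans (closedBall_subset_ball hr1)).trans ball_subset_interior_closedBall
  · rw [mem_closedBall, not_le]
    have h3 : dist ((1 - t) • y + t • z) y = t * dist y z := by
      have he : (1 - t) • y + t • z - y = t • (z - y) := by module
      rw [dist_eq_norm, he, norm_smul, Real.norm_of_nonneg ht0.le, dist_comm y z, dist_eq_norm]
    have h4 := dist_triangle x₀ ((1 - t) • y + t • z) y
    linarith
end

section
/- Every b-convex body K in a Minkowski space satisfies bd(K) = ⋃ {F : F is an exposed b-face of K}, i.e., the boundary of K is the union of its exposed b-faces. -/
open Metric Set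

theorem stmt_5 {E : Type*} [NormedAddCommGroup E] [NormedSpace ℝ E]
    [FiniteDimensional ℝ E] [Nontrivial E]
    (K : Set E) (hK : IsBConvexBody K) :
    frontier K = ⋃₀ {F : Set E | IsExposedBFace K F} := by
  obtain ⟨hb, hne, hh⟩ := hK
  have hcl : IsClosed K := by
    rw [← hh]
    exact isClosed_biInter fun x _ => isClosed_closedBall
  ext x
  simp only [mem_sUnion, mem_setOf_eq]
  constructor
  · intro hx
    rw [hcl.frontier_eq] at hx
    obtain ⟨hxK, hxi⟩ := hx
    have hC : {y : E | K ⊆ closedBall y 1} = ⋂ k ∈ K, closedBall k 1 := by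
      ext y
      simp only [mem_setOf_eq, mem_iInter, subset_def, mem_closedBall]
      exact forall₂_congr fun k _ => by rw [dist_comm]
    have hcomp : IsCompact {y : E | K ⊆ closedBall y 1} := by
      apply (isCompact_closedBall x 1).of_isClosed_subset
      · rw [hC]
        exact isClosed_biInter fun x _ => isClosed_closedBall
      · rw [hC]
        exact biInter_subset_of_mem hxK
    by_contra hcon
    have hlt : ∀ y, K ⊆ closedBall y 1 → dist x y < 1 := by
      intro y hy
      refine lt_of_le_of_ne (hy hxK) fun h => hcon ?_
      exact ⟨K ∩ sphere y 1, ⟨y, hy, ⟨x, hxK, h⟩, rfl⟩, hxK, h⟩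
    apply hxi
    rw [mem_interior_iff_mem_nhds, Metric.mem_nhds_iff]
    have key : ∃ r < (1 : ℝ), ∀ y, K ⊆ closedBall y 1 → dist x y ≤ r := by
      rcases eq_empty_or_nonempty {y : E | K ⊆ closedBall y 1} with he | hn
      · refine ⟨0, by norm_num, fun y hy => ?_⟩
        have : y ∈ {y : E | K ⊆ closedBall y 1} := hy
        rw [he] at this
        exact this.elim
      · obtain ⟨y, hy, hm⟩ := hcomp.exists_isMaxOn hn
          (f := fun y => dist x y) (by fun_prop)
        exact ⟨dist x y, hlt y hy, fun z hz => hm hz⟩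
    obtain ⟨r, hr, hd⟩ := key
    refine ⟨1 - r, by linarith, fun z hz => ?_⟩
    rw [← hh]
    simp only [ballHull, mem_iInter, mem_setOf_eq]
    intro y hy
    have h1 := hd y hy
    rw [mem_ball] at hz
    rw [mem_closedBall]
    linarith [dist_triangle z x y]
  · rintro ⟨F, ⟨y, hy, -, rfl⟩, hxK, hxs⟩
    rw [hcl.frontier_eq]
    refine ⟨hxK, fun hi => ?_⟩
    have := interior_mono hy hi
    rw [interior_closedBall y one_ne_zero, mem_ball] at this
    rw [mem_sphere] at hxs
    linarith
end

section
/- Let S be a nonempty b-bounded subset of a Minkowski space. Then bh₁(S) = ⋂ {B(x,1) : S ⊆ int(B(x,1))} = ⋂ {B(x,1) : S ⊆ B(x,r) for some r < 1} = ⋂ {B(x,r) : r < 1 and S ⊆ B(x,r)}. -/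
open Metric Set

theorem stmt_6 {E : Type*} [NormedAddCommGroup E] [NormedSpace ℝ E]
    [FiniteDimensional ℝ E] [Nontrivial E]
    (S : Set E) (hS : S.Nonempty) (hbb : circumradius S < 1) :
    (ballHull S = ⋂ x ∈ {x : E | S ⊆ interior (closedBall x 1)}, closedBall x 1) ∧
    (ballHull S = ⋂ x ∈ {x : E | ∃ r < (1 : ℝ), S ⊆ closedBall x r}, closedBall x 1) ∧
    (ballHull S =
      ⋂ p ∈ {p : E × ℝ | p.2 < 1 ∧ S ⊆ closedBall p.1 p.2}, closedBall p.1 p.2) := by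
  have key : ∀ p : E,
      (∀ x : E, (∃ r < (1 : ℝ), S ⊆ closedBall x r) → p ∈ closedBall x 1) →
      p ∈ ballHull S := by
    intro p hp
    simp only [ballHull, mem_iInter, mem_setOf_eq]
    intro x hx
    obtain ⟨ρ, ⟨_, c, hc⟩, hρ⟩ := exists_lt_of_csInf_lt
      (s := {r : ℝ | 0 ≤ r ∧ ∃ x : E, S ⊆ closedBall x r}) ⟨1, zero_le_one, x, hx⟩ hbb
    have hb : ∀ t : ℝ, 0 < t → t ≤ 1 → ‖p - x‖ ≤ 1 + t * ‖c - x‖ := by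
      intro t ht ht1
      have h1 := hp (x + t • (c - x)) ⟨(1 - t) + t * ρ, by nlinarith, by
        intro s hs
        have h1 := hx hs
        have h2 := hc hs
        rw [mem_closedBall, dist_eq_norm] at h1 h2 ⊢
        have e : s - (x + t • (c - x)) = (1 - t) • (s - x) + t • (s - c) := by module
        rw [e]
        refine (norm_add_le _ _).trans ?_
        rw [norm_smul, norm_smul, Real.norm_of_nonneg ht.le,
          Real.norm_of_nonneg (by linarith : (0:ℝ) ≤ 1 - t)]
        have := mul_le_mul_of_nonneg_left h1 (by linarith : (0:ℝ) ≤ 1 - t)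
        have := mul_le_mul_of_nonneg_left h2 ht.le
        linarith⟩
      rw [mem_closedBall, dist_eq_norm] at h1
      have e : p - x = (p - (x + t • (c - x))) + t • (c - x) := by module
      rw [e]
      refine (norm_add_le _ _).trans ?_
      rw [norm_smul, Real.norm_of_nonneg ht.le]
      linarith
    rw [mem_closedBall, dist_eq_norm]
    by_contra! hlt
    set N := ‖c - x‖
    have hN : 0 ≤ N := norm_nonneg _
    set δ := ‖p - x‖ - 1 with hδ
    have hδ0 : 0 < δ := by linarith
    have hq : 0 < δ + N + 1 := by linarith
    have h3 := hb (δ / (δ + N + 1)) (by positivity) (by rw [div_le_one hq]; linarith)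
    have h4 : δ / (δ + N + 1) * N < δ := by
      rw [div_mul_eq_mul_div, div_lt_iff₀ hq]; nlinarith
    linarith
  have key3 : ∀ p ∈ ballHull S, ∀ (x : E) (r : ℝ), r < 1 → S ⊆ closedBall x r →
      p ∈ closedBall x r := by
    intro p hp x r hr hx
    simp only [ballHull, mem_iInter, mem_setOf_eq] at hp
    obtain ⟨s0, hs0⟩ := hS
    have hr0 : 0 ≤ r := dist_nonneg.trans (hx hs0)
    rw [mem_closedBall, dist_eq_norm]
    by_contra! hlt
    have hn : 0 < ‖p - x‖ := by linarith
    set a : ℝ := (1 - r) / ‖p - x‖ with ha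
    have ha0 : 0 ≤ a := div_nonneg (by linarith) hn.le
    have han : a * ‖p - x‖ = 1 - r := div_mul_cancel₀ _ hn.ne'
    have h := hp (x - a • (p - x)) (by
      intro s hs
      have h1 := hx hs
      rw [mem_closedBall, dist_eq_norm] at h1 ⊢
      have e : s - (x - a • (p - x)) = (s - x) + a • (p - x) := by module
      rw [e]
      refine (norm_add_le _ _).trans ?_
      rw [norm_smul, Real.norm_of_nonneg ha0]
      linarith)
    rw [mem_closedBall, dist_eq_norm] at h
    have e : p - (x - a • (p - x)) = (1 + a) • (p - x) := by module
    rw [e, norm_smul, Real.norm_of_nonneg (by linarith)] at h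
    linarith
  refine ⟨Subset.antisymm ?_ ?_, Subset.antisymm ?_ ?_, Subset.antisymm ?_ ?_⟩
  · intro p hp
    simp only [ballHull, mem_iInter, mem_setOf_eq] at hp ⊢
    exact fun x hx => hp x (hx.trans interior_subset)
  · intro p hp
    simp only [mem_iInter, mem_setOf_eq] at hp
    refine key p fun x ⟨r, hr, hx⟩ => hp x ?_
    exact hx.trans ((closedBall_subset_ball hr).trans ball_subset_interior_closedBall)
  · intro p hp
    simp only [ballHull, mem_iInter, mem_setOf_eq] at hp ⊢
    exact fun x ⟨r, hr, hx⟩ => hp x (hx.trans (closedBall_subset_closedBall hr.le))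
  · intro p hp
    simp only [mem_iInter, mem_setOf_eq] at hp
    exact key p hp
  · intro p hp
    simp only [mem_iInter, mem_setOf_eq]
    exact fun q hq => key3 p hp q.1 q.2 hq.1 hq.2
  · intro p hp
    simp only [mem_iInter, mem_setOf_eq] at hp
    exact key p fun x ⟨r, hr, hx⟩ => closedBall_subset_closedBall hr.le (hp (x, r) ⟨hr, hx⟩)
end

section
/- Let S be a nonempty closed b-bounded subset of a Minkowski space. Then bh₁(S) = ⋂ {int(B(x,1)) : S ⊆ int(B(x,1))}, the intersection of all open unit balls whose closed interiors contain S. -/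
open Metric Set

theorem stmt_7 {E : Type*} [NormedAddCommGroup E] [NormedSpace ℝ E]
    [FiniteDimensional ℝ E] [Nontrivial E]
    (S : Set E) (hS : S.Nonempty) (hcl : IsClosed S) (hbb : circumradius S < 1) :
    ballHull S =
      ⋂ x ∈ {x : E | S ⊆ interior (closedBall x 1)}, interior (closedBall x 1) := by
  simp only [interior_closedBall _ (one_ne_zero : (1:ℝ) ≠ 0)]
  by_cases hne : ∃ r : ℝ, 0 ≤ r ∧ ∃ x : E, S ⊆ closedBall x r
  · obtain ⟨r, ⟨hr0, z, hz⟩, hr1⟩ := exists_lt_of_csInf_lt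
      (s := {r : ℝ | 0 ≤ r ∧ ∃ x : E, S ⊆ closedBall x r}) hne hbb
    haveI : ProperSpace E := FiniteDimensional.proper_real E
    have hcomp : IsCompact S :=
      (isCompact_closedBall z r).of_isClosed_subset hcl hz
    ext y
    simp only [ballHull, mem_iInter, mem_setOf_eq]
    constructor
    · intro h x hx
      obtain ⟨p, hp, hmax⟩ := hcomp.exists_isMaxOn hS
        (f := fun q => dist q x) (by fun_prop)
      have hp1 : dist p x < 1 := hx hp
      by_cases hyx : y = x
      · simp [hyx]
      have hn : 0 < ‖y - x‖ := norm_pos_iff.2 (sub_ne_zero.2 hyx)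
      set c := (1 - dist p x) / ‖y - x‖ with hc
      have hc0 : 0 < c := div_pos (by linarith) hn
      have hcn : c * ‖y - x‖ = 1 - dist p x := by rw [hc]; field_simp
      have h1 := h (x - c • (y - x)) (by
        intro q hq
        have hq1 : dist q x ≤ dist p x := hmax hq
        rw [mem_closedBall, dist_eq_norm]
        rw [dist_eq_norm q x] at hq1
        have e : q - (x - c • (y - x)) = (q - x) + c • (y - x) := by abel
        rw [e]
        refine (norm_add_le _ _).trans ?_
        rw [norm_smul, Real.norm_of_nonneg hc0.le]
        linarith)
      rw [mem_closedBall, dist_eq_norm] at h1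
      have e : y - (x - c • (y - x)) = (1 + c) • (y - x) := by
        rw [add_smul, one_smul]; abel
      rw [e, norm_smul, Real.norm_of_nonneg (by linarith)] at h1
      rw [mem_ball, dist_eq_norm]
      nlinarith
    · intro h x hx
      rw [mem_closedBall]
      have key : ∀ t ∈ Ioo (0:ℝ) 1, dist y (x + t • (z - x)) ≤ 1 := by
        rintro t ⟨ht0, ht1⟩
        refine le_of_lt (h _ ?_)
        intro q hq
        have a1 := hx hq
        have a2 := hz hq
        rw [mem_closedBall, dist_eq_norm] at a1 a2
        rw [mem_ball, dist_eq_norm]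
        have e : q - (x + t • (z - x)) = (1 - t) • (q - x) + t • (q - z) := by module
        rw [e]
        refine (norm_add_le _ _).trans_lt ?_
        rw [norm_smul, norm_smul, Real.norm_of_nonneg ht0.le,
          Real.norm_of_nonneg (by linarith)]
        nlinarith
      have hlim : Filter.Tendsto (fun t : ℝ => dist y (x + t • (z - x)))
          (nhdsWithin 0 (Ioi 0)) (nhds (dist y x)) := by
        have hcont : Continuous (fun t : ℝ => dist y (x + t • (z - x))) := by fun_prop
        have := hcont.tendsto 0
        simp only [zero_smul, add_zero] at this
        exact this.mono_left nhdsWithin_le_nhds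
      exact le_of_tendsto hlim
        (Filter.mem_of_superset (Ioo_mem_nhdsGT one_pos) key)
  · have h1 : ∀ x : E, ¬ S ⊆ closedBall x 1 := fun x hx => hne ⟨1, zero_le_one, x, hx⟩
    have h2 : ∀ x : E, ¬ S ⊆ ball x 1 := fun x hx => h1 x (hx.trans ball_subset_closedBall)
    simp [ballHull, h1, h2]
end

section
/- A Minkowski space has strictly convex norm if and only if for every r > 0 and any two distinct points x₁, x₂, the circumradius of B(x₁,r) ∩ B(x₂,r) is strictly smaller than r (with the convention rad(∅) = 0). -/
open Metric Set

theorem stmt_8 {E : Type*} [NormedAddCommGroup E] [NormedSpace ℝ E]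
    [FiniteDimensional ℝ E] [Nontrivial E] :
    StrictConvexSpace ℝ E ↔
      ∀ r : ℝ, 0 < r → ∀ x₁ x₂ : E, x₁ ≠ x₂ →
        circumradius (closedBall x₁ r ∩ closedBall x₂ r) < r := by
  constructor
  · intro hsc r hr x₁ x₂ hne
    set S := closedBall x₁ r ∩ closedBall x₂ r with hS
    have hbdd : BddBelow {r : ℝ | 0 ≤ r ∧ ∃ x : E, S ⊆ closedBall x r} := ⟨0, fun a ha => ha.1⟩
    rcases S.eq_empty_or_nonempty with he | hn
    · refine lt_of_le_of_lt (csInf_le hbdd (a := 0) ⟨le_rfl, 0, ?_⟩) hr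
      rw [he]; exact empty_subset _
    · have hc : IsCompact S := by
        have := FiniteDimensional.proper ℝ E
        exact (isCompact_closedBall x₁ r).inter_right isClosed_closedBall
      obtain ⟨z, hz, hmax⟩ := hc.exists_isMaxOn hn
        (f := fun z => dist z ((1/2 : ℝ) • x₁ + (1/2 : ℝ) • x₂)) (by fun_prop)
      refine lt_of_le_of_lt (csInf_le hbdd
        ⟨dist_nonneg, _, fun w hw => mem_closedBall.2 (hmax hw)⟩) ?_
      have h1 : ‖z - x₁‖ ≤ r := by simpa [dist_eq_norm] using hz.1
      have h2 : ‖z - x₂‖ ≤ r := by simpa [dist_eq_norm] using hz.2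
      have h3 := norm_combo_lt_of_ne h1 h2 (a := 1/2) (b := 1/2)
        (fun h => hne (sub_right_injective h)) (by norm_num) (by norm_num) (by norm_num)
      show dist z ((1/2 : ℝ) • x₁ + (1/2 : ℝ) • x₂) < r
      rw [dist_eq_norm]
      have e : z - ((1/2 : ℝ) • x₁ + (1/2 : ℝ) • x₂)
          = (1/2 : ℝ) • (z - x₁) + (1/2 : ℝ) • (z - x₂) := by module
      rw [e]
      exact h3
  · intro h
    refine StrictConvexSpace.of_norm_add_ne_two fun x y hx hy hxy hs => ?_
    have hu : (1/2 : ℝ) • (x - y) ≠ (1/2 : ℝ) • (y - x) := by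
      intro he
      apply hxy
      rw [← sub_eq_zero]
      calc x - y = (1/2 : ℝ) • (x - y) - (1/2 : ℝ) • (y - x) := by module
        _ = 0 := sub_eq_zero.2 he
    refine absurd (h 1 one_pos _ _ hu) (not_lt.2 ?_)
    refine le_csInf ⟨1, zero_le_one, _, inter_subset_left⟩ ?_
    rintro r ⟨-, c, hc⟩
    have e1 : (1/2 : ℝ) • (x + y) - (1/2 : ℝ) • (x - y) = y := by module
    have e2 : (1/2 : ℝ) • (x + y) - (1/2 : ℝ) • (y - x) = x := by module
    have e3 : -((1/2 : ℝ) • (x + y)) - (1/2 : ℝ) • (x - y) = -x := by module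
    have e4 : -((1/2 : ℝ) • (x + y)) - (1/2 : ℝ) • (y - x) = -y := by module
    have m1 := hc (a := (1/2 : ℝ) • (x + y))
      ⟨by rw [mem_closedBall, dist_eq_norm, e1, hy], by rw [mem_closedBall, dist_eq_norm, e2, hx]⟩
    have m2 := hc (a := -((1/2 : ℝ) • (x + y)))
      ⟨by rw [mem_closedBall, dist_eq_norm, e3, norm_neg, hx],
        by rw [mem_closedBall, dist_eq_norm, e4, norm_neg, hy]⟩
    have h5 := dist_triangle_right ((1/2 : ℝ) • (x + y)) (-((1/2 : ℝ) • (x + y))) c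
    have e5 : (1/2 : ℝ) • (x + y) - -((1/2 : ℝ) • (x + y)) = x + y := by module
    rw [dist_eq_norm, e5, hs] at h5
    rw [mem_closedBall] at m1 m2
    linarith
end

section
/- A Minkowski space has strictly convex norm if and only if every b-convex body that is not b-bounded is a closed ball of radius 1. -/
open Metric Set

theorem aux_center {E : Type*} [NormedAddCommGroup E] [NormedSpace ℝ E]
    {x y : E} (h : closedBall x 1 ⊆ closedBall y 1) : x = y := by
  by_contra hne
  have hd : x - y ≠ 0 := sub_ne_zero.mpr hne
  have hpos : 0 < ‖x - y‖ := norm_pos_iff.mpr hd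
  have h1 : x + (‖x - y‖⁻¹ : ℝ) • (x - y) ∈ closedBall x 1 := by
    rw [mem_closedBall, dist_eq_norm, add_sub_cancel_left, norm_smul, norm_inv, norm_norm,
      inv_mul_cancel₀ hpos.ne']
  have h2 := h h1
  rw [mem_closedBall, dist_eq_norm] at h2
  have h3 : x + (‖x - y‖⁻¹ : ℝ) • (x - y) - y = (1 + ‖x - y‖⁻¹ : ℝ) • (x - y) := by
    module
  rw [h3, norm_smul, Real.norm_of_nonneg (by positivity), add_mul,
    inv_mul_cancel₀ hpos.ne'] at h2
  linarith

theorem aux_inter {E : Type*} [NormedAddCommGroup E] (x y : E) :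
    ballHull (closedBall x 1 ∩ closedBall y 1) = closedBall x 1 ∩ closedBall y 1 := by
  apply Subset.antisymm
  · intro z hz
    simp only [ballHull, mem_iInter, mem_ofPred_eq] at hz
    exact ⟨hz x inter_subset_left, hz y inter_subset_right⟩
  · intro z hz
    simp only [ballHull, mem_iInter, mem_ofPred_eq]
    exact fun w hw => hw hz

theorem stmt_9 {E : Type*} [NormedAddCommGroup E] [NormedSpace ℝ E]
    [FiniteDimensional ℝ E] [Nontrivial E] :
    StrictConvexSpace ℝ E ↔
      ∀ K : Set E, IsBConvexBody K → ¬ circumradius K < 1 →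
        ∃ x : E, K = closedBall x 1 := by
  constructor
  · intro hsc K ⟨hb, hne, hK⟩ hrad
    have hproper : ProperSpace E := FiniteDimensional.proper ℝ E
    have hclosed : IsClosed K := by
      rw [← hK]
      exact isClosed_biInter fun x _ => isClosed_closedBall
    have hcomp : IsCompact K := Metric.isCompact_of_isClosed_isBounded hclosed hb
    have hex : ∃ x : E, K ⊆ closedBall x 1 := by
      by_contra hno
      push Not at hno
      have huniv : K = univ := by
        rw [← hK]
        apply eq_univ_of_forall
        intro z
        simp only [ballHull, mem_iInter, mem_ofPred_eq]
        exact fun w hw => absurd hw (hno w)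
      rw [huniv] at hb
      exact NormedSpace.unbounded_univ ℝ E hb
    obtain ⟨x, hx⟩ := hex
    have huniq : ∀ y, K ⊆ closedBall y 1 → y = x := by
      intro y hy
      by_contra hyx
      apply hrad
      obtain ⟨p, hp, hmax⟩ := hcomp.exists_isMaxOn hne
        (f := fun p => dist p (midpoint ℝ x y)) (by fun_prop)
      have hlt : dist p (midpoint ℝ x y) < 1 := by
        have h1 := hx hp
        have h2 := hy hp
        rw [mem_closedBall, dist_eq_norm] at h1 h2
        have h3 := norm_combo_lt_of_ne (E := E) (x := p - x) (y := p - y) h1 h2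
          (fun h => hyx (sub_right_injective h).symm)
          (a := 1/2) (b := 1/2) (by norm_num) (by norm_num) (by norm_num)
        rw [dist_eq_norm]
        have h4 : p - midpoint ℝ x y = (1/2 : ℝ) • (p - x) + (1/2 : ℝ) • (p - y) := by
          rw [midpoint_eq_smul_add]
          simp only [invOf_eq_inv]
          module
        rw [h4]
        exact h3
      refine lt_of_le_of_lt (csInf_le ⟨0, fun r hr => hr.1⟩ ?_) hlt
      exact ⟨dist_nonneg, midpoint ℝ x y, fun q hq => hmax hq⟩
    refine ⟨x, Subset.antisymm hx ?_⟩
    intro z hz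
    rw [← hK]
    simp only [ballHull, mem_iInter, mem_ofPred_eq]
    intro w hw
    rw [huniq w hw]
    exact hz
  · intro H
    apply StrictConvexSpace.of_norm_add_ne_two
    intro a b ha hb hab hsum
    set p : E := (1/2 : ℝ) • (a + b) with hp
    set v : E := (1/2 : ℝ) • (a - b) with hv
    have hpn : ‖p‖ = 1 := by
      rw [hp, norm_smul, hsum]; norm_num
    have hpK : p ∈ closedBall (0:E) 1 ∩ closedBall v 1 := by
      constructor
      · simp [hpn]
      · rw [mem_closedBall, dist_eq_norm, show p - v = b by rw [hp, hv]; module, hb]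
    have hnK : -p ∈ closedBall (0:E) 1 ∩ closedBall v 1 := by
      constructor
      · simp [hpn]
      · rw [mem_closedBall, dist_eq_norm, show -p - v = -a by rw [hp, hv]; module, norm_neg, ha]
    obtain ⟨x, hx⟩ := H (closedBall (0:E) 1 ∩ closedBall v 1)
      ⟨isBounded_closedBall.subset inter_subset_left, ⟨p, hpK⟩, aux_inter _ _⟩ (by
        rw [not_lt]
        apply le_csInf
        · exact ⟨1, zero_le_one, 0, inter_subset_left⟩
        · rintro r ⟨_, c, hc⟩
          have h1 := hc hpK
          have h2 := hc hnK
          rw [mem_closedBall] at h1 h2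
          have h3 := dist_triangle_right p (-p) c
          have h4 : dist p (-p) = 2 := by
            rw [dist_eq_norm, show p - -p = (2:ℝ) • p by module, norm_smul, hpn]; norm_num
          linarith)
    have e1 : x = 0 := aux_center (hx ▸ inter_subset_left)
    have e2 : x = v := aux_center (hx ▸ inter_subset_right)
    have hv0 : v = 0 := e2.symm.trans e1
    rw [hv, smul_eq_zero] at hv0
    rcases hv0 with h | h
    · norm_num at h
    · exact hab (sub_eq_zero.mp h)
end

section
/- A Minkowski space has strictly convex norm if and only if for every x and every r ∈ (0,1), each supporting sphere of the ball B(x,r) meets B(x,r) in exactly one point; i.e., whenever B(x,r) ⊆ B(y,1) and B(x,r) ∩ S(y,1) ≠ ∅, the intersection B(x,r) ∩ S(y,1) is a singleton. -/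
open Metric Set

theorem stmt_10 {E : Type*} [NormedAddCommGroup E] [NormedSpace ℝ E]
    [FiniteDimensional ℝ E] [Nontrivial E] :
    StrictConvexSpace ℝ E ↔
      ∀ x : E, ∀ r ∈ Set.Ioo (0 : ℝ) 1, ∀ y : E,
        closedBall x r ⊆ closedBall y 1 → (closedBall x r ∩ sphere y 1).Nonempty →
          ∃ z : E, closedBall x r ∩ sphere y 1 = {z} := by
  constructor
  · intro _ x r hr y hsub ⟨p, hp⟩
    obtain ⟨hr0, hr1⟩ := hr
    have hxy : ‖x - y‖ ≤ 1 - r := by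
      by_cases h0 : x - y = 0
      · rw [h0, norm_zero]; linarith
      have hn : 0 < ‖x - y‖ := norm_pos_iff.2 h0
      have hm : x + (r / ‖x - y‖) • (x - y) ∈ closedBall x r := by
        rw [mem_closedBall_iff_norm, add_sub_cancel_left, norm_smul, Real.norm_eq_abs,
          abs_of_pos (div_pos hr0 hn), div_mul_cancel₀ _ hn.ne']
      have h2 := hsub hm
      have e : x + (r / ‖x - y‖) • (x - y) - y = (1 + r / ‖x - y‖) • (x - y) := by
        module
      rw [mem_closedBall_iff_norm, e, norm_smul, Real.norm_eq_abs,
        abs_of_pos (by positivity), add_mul, div_mul_cancel₀ _ hn.ne'] at h2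
      linarith
    have key : ∀ q ∈ closedBall x r ∩ sphere y 1,
        ‖q - x‖ = r ∧ SameRay ℝ (q - x) (x - y) ∧ ‖x - y‖ = 1 - r := by
      intro q ⟨h1, h2⟩
      rw [mem_closedBall_iff_norm] at h1
      rw [mem_sphere_iff_norm] at h2
      have e : q - y = (q - x) + (x - y) := by abel
      have h3 := norm_add_le (q - x) (x - y)
      rw [← e, h2] at h3
      refine ⟨by linarith, ?_, by linarith⟩
      rw [sameRay_iff_norm_add, ← e, h2]
      linarith
    refine ⟨p, Set.eq_singleton_iff_unique_mem.2 ⟨hp, fun q hq => ?_⟩⟩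
    obtain ⟨p1, p2, p3⟩ := key p hp
    obtain ⟨q1, q2, -⟩ := key q hq
    have hs : SameRay ℝ (q - x) (p - x) := q2.trans p2.symm (fun h => by
      rw [h, norm_zero] at p3; linarith)
    have := hs.eq_of_norm_eq (q1.trans p1.symm)
    simpa using this
  · intro H
    refine StrictConvexSpace.of_norm_add_ne_two fun a b ha hb hab h2 => hab ?_
    have hx : ‖(1 / 4 : ℝ) • (a + b)‖ = 1 / 2 := by
      rw [norm_smul, h2]; norm_num
    have hsub : closedBall ((1 / 4 : ℝ) • (a + b)) (1 / 2) ⊆ closedBall (0 : E) 1 := by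
      apply closedBall_subset_closedBall'
      rw [dist_zero_right, hx]; norm_num
    have mem : ∀ c d : E, ‖c‖ = 1 → ‖d‖ = 1 → ‖c + d‖ = 2 →
        (1 / 4 : ℝ) • (c + d) + (1 / 2 : ℝ) • c ∈
          closedBall ((1 / 4 : ℝ) • (c + d)) (1 / 2) ∩ sphere (0 : E) 1 := by
      intro c d hc hd hcd
      have hq : ∀ u : E, ‖u‖ = 1 → ‖(1 / 4 : ℝ) • (c + d) + (1 / 2 : ℝ) • u‖ ≤ 1 := by
        intro u hu
        refine (norm_add_le _ _).trans ?_
        rw [norm_smul, norm_smul, hcd, hu]; norm_num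
      refine ⟨?_, ?_⟩
      · rw [mem_closedBall_iff_norm, add_sub_cancel_left, norm_smul, hc]; norm_num
      · rw [mem_sphere_zero_iff_norm]
        have e : c + d = ((1 / 4 : ℝ) • (c + d) + (1 / 2 : ℝ) • c) +
            ((1 / 4 : ℝ) • (c + d) + (1 / 2 : ℝ) • d) := by module
        have h3 := norm_add_le ((1 / 4 : ℝ) • (c + d) + (1 / 2 : ℝ) • c)
            ((1 / 4 : ℝ) • (c + d) + (1 / 2 : ℝ) • d)
        rw [← e, hcd] at h3
        linarith [hq c hc, hq d hd]
    have ma := mem a b ha hb h2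
    have mb := mem b a hb ha (by rw [add_comm, h2])
    rw [add_comm b a] at mb
    obtain ⟨z, hz⟩ := H _ (1 / 2) ⟨by norm_num, by norm_num⟩ 0 hsub ⟨_, ma⟩
    rw [hz, mem_singleton_iff] at ma mb
    have h4 := add_left_cancel (ma.trans mb.symm)
    exact smul_right_injective E (by norm_num : (1 / 2 : ℝ) ≠ 0) h4
end

section
/- A Minkowski space has strictly convex norm if and only if every b-convex body that contains at least two points has nonempty interior. -/
open Metric Set

theorem stmt_11 {E : Type*} [NormedAddCommGroup E] [NormedSpace ℝ E]
    [FiniteDimensional ℝ E] [Nontrivial E] :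
    StrictConvexSpace ℝ E ↔
      ∀ K : Set E, IsBConvexBody K → (∃ a ∈ K, ∃ b ∈ K, a ≠ b) →
        (interior K).Nonempty := by
  constructor
  · rintro hE K ⟨_, _, hK⟩ ⟨a, ha, b, hb, hab⟩
    have hc : ∀ x ∈ {x : E | K ⊆ closedBall x 1},
        dist ((1/2:ℝ) • a + (1/2:ℝ) • b) x < 1 := by
      intro x hx
      have h := combo_mem_ball_of_ne (hx ha) (hx hb) hab (a := (1/2:ℝ)) (b := (1/2:ℝ))
        (by norm_num) (by norm_num) (by norm_num)
      exact h
    set c := (1/2:ℝ) • a + (1/2:ℝ) • b with hcdef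
    have hX : {x : E | K ⊆ closedBall x 1} = ⋂ k ∈ K, closedBall k 1 := by
      ext x
      simp only [mem_setOf_eq, mem_iInter, Set.subset_def, mem_closedBall]
      constructor
      · intro h k hk
        rw [dist_comm]; exact h k hk
      · intro h k hk
        rw [dist_comm]; exact h k hk
    have hcomp : IsCompact {x : E | K ⊆ closedBall x 1} := by
      rw [hX]
      refine (isCompact_closedBall a 1).of_isClosed_subset ?_ (biInter_subset_of_mem ha)
      exact isClosed_biInter fun k _ => isClosed_closedBall
    have key : ∃ r < (1:ℝ), ∀ x ∈ {x : E | K ⊆ closedBall x 1}, dist c x ≤ r := by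
      rcases Set.eq_empty_or_nonempty {x : E | K ⊆ closedBall x 1} with h | h
      · exact ⟨0, by norm_num, by rw [h]; simp⟩
      · obtain ⟨y, hy, hmax⟩ := hcomp.exists_isMaxOn h
          (f := fun x => dist c x) (by fun_prop)
        exact ⟨dist c y, hc y hy, fun x hx => hmax hx⟩
    obtain ⟨r, hr, hle⟩ := key
    refine ⟨c, mem_interior.2 ⟨ball c (1 - r), ?_, isOpen_ball, mem_ball_self (by linarith)⟩⟩
    intro z hz
    rw [← hK]
    simp only [ballHull, mem_iInter]
    intro x hx
    have h1 := hle x hx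
    have h2 := dist_triangle z c x
    rw [mem_ball] at hz
    rw [mem_closedBall]
    linarith
  · intro H
    refine StrictConvexSpace.of_norm_add ?_
    intro u v hu hv huv
    by_contra hray
    have hne : u ≠ v := by
      rintro rfl
      exact hray (SameRay.refl _)
    set K : Set E := closedBall 0 1 ∩ closedBall (u + v) 1 with hKdef
    have huK : u ∈ K := by
      refine ⟨by simp [hu], ?_⟩
      simp [dist_eq_norm, hv]
    have hvK : v ∈ K := by
      refine ⟨by simp [hv], ?_⟩
      simp [dist_eq_norm, hu]
    have hbody : IsBConvexBody K := by
      refine ⟨isBounded_closedBall.subset inter_subset_left, ⟨u, huK⟩, ?_⟩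
      apply Subset.antisymm
      · intro z hz
        simp only [ballHull, mem_iInter] at hz
        exact ⟨hz 0 inter_subset_left, hz (u + v) inter_subset_right⟩
      · intro z hz
        simp only [ballHull, mem_iInter]
        intro x hx
        exact hx hz
    obtain ⟨p, hp⟩ := H K hbody ⟨u, huK, v, hvK, hne⟩
    have hpK := interior_subset hp
    obtain ⟨e, he, hball⟩ := Metric.isOpen_iff.1 isOpen_interior p hp
    have hq : p + (e / 4) • (u + v) ∈ K := by
      apply interior_subset
      apply hball
      rw [mem_ball, dist_eq_norm, add_sub_cancel_left, norm_smul, huv, Real.norm_eq_abs,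
        abs_of_pos (by linarith)]
      linarith
    have h1 : ‖p + (e / 4) • (u + v)‖ ≤ 1 := by simpa using hq.1
    have h2 : ‖p - (u + v)‖ ≤ 1 := by simpa [dist_eq_norm] using hpK.2
    have h3 := norm_sub_le (p + (e / 4) • (u + v)) (p - (u + v))
    have h4 : p + (e / 4) • (u + v) - (p - (u + v)) = (1 + e / 4) • (u + v) := by
      module
    rw [h4, norm_smul, huv, Real.norm_eq_abs, abs_of_pos (by linarith)] at h3
    linarith
end

section
/- Let K be a nonempty compact convex subset of a finite-dimensional real normed vector space, let H be an affine hyperplane, and let (yᵢ) be a sequence converging to y₀ such that H ∩ (K + yᵢ) ≠ ∅ for all i. Then H ∩ (K + y₀) ≠ ∅ and the sets H ∩ (K + yᵢ) converge to H ∩ (K + y₀) in the Hausdorff distance. -/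
open Metric Set Filter

theorem aux_upper {E : Type*} [NormedAddCommGroup E] [NormedSpace ℝ E]
    (K : Set E) (hKc : IsCompact K) (f : E →L[ℝ] ℝ) (t₀ ε : ℝ) (hε : 0 < ε) :
    ∃ δ > 0, ∀ x ∈ K, |f x - t₀| < δ → ∃ z ∈ K, f z = t₀ ∧ dist x z < ε := by
  let C : Set E := K \ ⋃ z ∈ {z | z ∈ K ∧ f z = t₀}, ball z ε
  have hC : IsCompact C := hKc.diff (isOpen_biUnion fun _ _ => isOpen_ball)
  have key : ∀ x ∈ K, x ∉ C → ∃ z ∈ K, f z = t₀ ∧ dist x z < ε := by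
    intro x hx hxC
    have h : x ∈ ⋃ z ∈ {z | z ∈ K ∧ f z = t₀}, ball z ε := by
      by_contra h
      exact hxC ⟨hx, h⟩
    simp only [mem_iUnion, mem_ball, mem_setOf_eq] at h
    obtain ⟨z, hz, hd⟩ := h
    exact ⟨z, hz.1, hz.2, hd⟩
  rcases C.eq_empty_or_nonempty with he | hn
  · refine ⟨1, one_pos, fun x hx _ => key x hx ?_⟩
    simp [he]
  · obtain ⟨m, hm, hmin⟩ := hC.exists_isMinOn hn
      (f := fun x => |f x - t₀|) (by fun_prop)
    refine ⟨|f m - t₀|, ?_, fun x hx hlt => key x hx fun hxC => ?_⟩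
    · rw [gt_iff_lt, abs_pos, sub_ne_zero]
      intro h
      refine hm.2 ?_
      simp only [mem_iUnion]
      exact ⟨m, ⟨hm.1, h⟩, mem_ball_self hε⟩
    · exact absurd (hmin hxC) (not_le.mpr hlt)

theorem aux_lower1 {E : Type*} [NormedAddCommGroup E] [NormedSpace ℝ E]
    (K : Set E) (hKc : IsCompact K) (hK : Convex ℝ K) (f : E →L[ℝ] ℝ) (t₀ ε : ℝ) (hε : 0 < ε) :
    ∃ δ > 0, ∀ t, t₀ ≤ t → t - t₀ < δ → (∃ p ∈ K, f p = t) →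
      ∀ x ∈ K, f x = t₀ → ∃ z ∈ K, f z = t ∧ dist x z < ε := by
  by_cases h : ∃ p ∈ K, t₀ < f p
  · obtain ⟨p, hp, hlt⟩ := h
    obtain ⟨D, hD⟩ := isBounded_iff.mp hKc.isBounded
    have hD0 : 0 ≤ D := dist_nonneg.trans (hD hp hp)
    have hg : 0 < f p - t₀ := by linarith
    refine ⟨min (f p - t₀) (ε / (D + 1) * (f p - t₀)), by positivity, ?_⟩
    intro t ht htd _ x hx hfx
    have h1 := htd.trans_le (min_le_left _ _)
    have h2 := htd.trans_le (min_le_right _ _)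
    set l := (t - t₀) / (f p - t₀) with hl
    have hl0 : 0 ≤ l := div_nonneg (by linarith) hg.le
    have hl1 : l ≤ 1 := (div_le_one hg).mpr h1.le
    have hl2 : l < ε / (D + 1) := (div_lt_iff₀ hg).mpr h2
    have hlm : l * (f p - t₀) = t - t₀ := div_mul_cancel₀ _ hg.ne'
    refine ⟨x + l • (p - x), hK.add_smul_sub_mem hx hp ⟨hl0, hl1⟩, ?_, ?_⟩
    · simp only [map_add, map_smul, map_sub, smul_eq_mul, hfx]
      linarith
    · have hd := hD hp hx
      rw [dist_eq_norm] at hd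
      rw [dist_self_add_right, norm_smul, Real.norm_of_nonneg hl0]
      rw [lt_div_iff₀ (by positivity)] at hl2
      nlinarith
  · push Not at h
    refine ⟨1, one_pos, ?_⟩
    rintro t ht - ⟨p, hp, rfl⟩ x hx hfx
    exact ⟨x, hx, by rw [hfx]; exact le_antisymm ht (h p hp), by simpa using hε⟩

theorem aux_lower {E : Type*} [NormedAddCommGroup E] [NormedSpace ℝ E]
    (K : Set E) (hKc : IsCompact K) (hK : Convex ℝ K) (f : E →L[ℝ] ℝ) (t₀ ε : ℝ) (hε : 0 < ε) :
    ∃ δ > 0, ∀ t, |t - t₀| < δ → (∃ p ∈ K, f p = t) →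
      ∀ x ∈ K, f x = t₀ → ∃ z ∈ K, f z = t ∧ dist x z < ε := by
  obtain ⟨d1, h1, H1⟩ := aux_lower1 K hKc hK f t₀ ε hε
  obtain ⟨d2, h2, H2⟩ := aux_lower1 K hKc hK (-f) (-t₀) ε hε
  refine ⟨min d1 d2, lt_min h1 h2, ?_⟩
  intro t ht hp x hx hfx
  have ha := abs_lt.mp (ht.trans_le (min_le_left _ _))
  have hb := abs_lt.mp (ht.trans_le (min_le_right _ _))
  rcases le_total t₀ t with h | h
  · exact H1 t h ha.2 hp x hx hfx
  · obtain ⟨p, hp, hpt⟩ := hp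
    obtain ⟨z, hz, hzt, hd⟩ := H2 (-t) (by linarith) (by linarith) ⟨p, hp, by simp [hpt]⟩ x hx
      (by simp [hfx])
    exact ⟨z, hz, by simpa using hzt, hd⟩

theorem stmt_12 {E : Type*} [NormedAddCommGroup E] [NormedSpace ℝ E]
    [FiniteDimensional ℝ E]
    (K : Set E) (hKne : K.Nonempty) (hKc : IsCompact K) (hKconv : Convex ℝ K)
    (f : E →L[ℝ] ℝ) (hf : f ≠ 0) (c : ℝ)
    (H : Set E) (hH : H = f ⁻¹' {c})
    (y : ℕ → E) (y₀ : E) (hy : Tendsto y atTop (nhds y₀))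
    (hne : ∀ i : ℕ, (H ∩ ((· + y i) '' K)).Nonempty) :
    (H ∩ ((· + y₀) '' K)).Nonempty ∧
      Tendsto (fun i : ℕ =>
          hausdorffDist (H ∩ ((· + y i) '' K)) (H ∩ ((· + y₀) '' K)))
        atTop (nhds 0) := by
  subst hH
  have ht : Tendsto (fun i => c - f (y i)) atTop (nhds (c - f y₀)) :=
    tendsto_const_nhds.sub ((f.continuous.tendsto y₀).comp hy)
  have hp : ∀ i, ∃ p ∈ K, f p = c - f (y i) := by
    intro i
    obtain ⟨_, hx, p, hp, rfl⟩ := hne i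
    simp only [mem_preimage, map_add, mem_singleton_iff] at hx
    exact ⟨p, hp, by linarith⟩
  constructor
  · have hcl : IsClosed (f '' K) := (hKc.image f.continuous).isClosed
    obtain ⟨p, hp, hpe⟩ := hcl.mem_of_tendsto ht (Eventually.of_forall hp)
    exact ⟨p + y₀, by simp [hpe], p, hp, rfl⟩
  · rw [Metric.tendsto_atTop']
    intro ε hε
    obtain ⟨d1, h1, H1⟩ := aux_upper K hKc f (c - f y₀) (ε/3) (by positivity)
    obtain ⟨d2, h2, H2⟩ := aux_lower K hKc hKconv f (c - f y₀) (ε/3) (by positivity)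
    have e1 := Metric.tendsto_nhds.mp ht _ (lt_min h1 h2)
    have e2 := Metric.tendsto_nhds.mp hy (ε/3) (by positivity)
    obtain ⟨N, hN⟩ := eventually_atTop.mp (e1.and e2)
    refine ⟨N, fun i hi => ?_⟩
    obtain ⟨ha, hb⟩ := hN i hi.le
    rw [Real.dist_eq] at ha
    have ha1 := ha.trans_le (min_le_left _ _)
    have ha2 := ha.trans_le (min_le_right _ _)
    rw [Real.dist_0_eq_abs, abs_of_nonneg hausdorffDist_nonneg]
    refine (hausdorffDist_le_of_mem_dist (r := ε/3 + ε/3) (by positivity) ?_ ?_).trans_lt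
      (by linarith)
    · rintro _ ⟨hx, k, hk, rfl⟩
      simp only [mem_preimage, map_add, mem_singleton_iff] at hx
      have hk' : f k = c - f (y i) := by linarith
      obtain ⟨z, hz, hzt, hd⟩ := H1 k hk (by rwa [hk'])
      exact ⟨z + y₀, ⟨by simp [hzt], z, hz, rfl⟩,
        (dist_add_add_le _ _ _ _).trans (by linarith)⟩
    · rintro _ ⟨hx, k, hk, rfl⟩
      simp only [mem_preimage, map_add, mem_singleton_iff] at hx
      obtain ⟨z, hz, hzt, hd⟩ := H2 _ ha2 (hp i) k hk (by linarith)
      rw [dist_comm] at hb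
      exact ⟨z + y i, ⟨by simp [hzt], z, hz, rfl⟩,
        (dist_add_add_le _ _ _ _).trans (by linarith)⟩
end

section
/- Let C₁ ⊆ C₂ ⊆ … be an increasing sequence of b-convex bodies in a Minkowski space of dimension n such that the dimension of the affine hull of bh₁(⋃ᵢ Cᵢ) belongs to {0, 1, n−1, n}. Then cl(⋃ᵢ Cᵢ) = bh₁(⋃ᵢ Cᵢ); in particular, cl(⋃ᵢ Cᵢ) is a b-convex body. -/
open Metric Set

theorem aux_subset_hull {E : Type*} [NormedAddCommGroup E] (S : Set E) : S ⊆ ballHull S := by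
  intro s hs
  simp only [ballHull, mem_iInter, mem_setOf_eq]
  exact fun x hx => hx hs

theorem aux_mem_hull {E : Type*} [NormedAddCommGroup E] {S : Set E} {p : E} :
    p ∈ ballHull S ↔ ∀ x, S ⊆ closedBall x 1 → p ∈ closedBall x 1 := by
  simp only [ballHull, mem_iInter, mem_setOf_eq]

theorem aux_closed {E : Type*} [NormedAddCommGroup E] (S : Set E) : IsClosed (ballHull S) :=
  isClosed_biInter fun _ _ => isClosed_closedBall

theorem aux_convex {E : Type*} [NormedAddCommGroup E] [NormedSpace ℝ E] (S : Set E) :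
    Convex ℝ (ballHull S) :=
  convex_iInter₂ fun x _ => convex_closedBall x 1

theorem aux_limit {E : Type*} [NormedAddCommGroup E] [NormedSpace ℝ E]
    [FiniteDimensional ℝ E] (C : ℕ → Set E) (hmono : Monotone C) (hne : (C 0).Nonempty)
    (x : ℕ → E) (hx : ∀ i, C i ⊆ closedBall (x i) 1) :
    ∃ a, (⋃ i, C i) ⊆ closedBall a 1 ∧ ∃ φ : ℕ → ℕ, StrictMono φ ∧
      Filter.Tendsto (x ∘ φ) Filter.atTop (nhds a) := by
  obtain ⟨c, hc⟩ := hne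
  obtain ⟨a, -, φ, hφ, hlim⟩ := (isCompact_closedBall c 1).tendsto_subseq (x := x) (fun i => by
    rw [mem_closedBall_comm]
    exact hx i (hmono (Nat.zero_le i) hc))
  refine ⟨a, ?_, φ, hφ, hlim⟩
  intro s hs
  obtain ⟨i, hi⟩ := mem_iUnion.1 hs
  have h1 : Filter.Tendsto (fun k => dist s ((x ∘ φ) k)) Filter.atTop (nhds (dist s a)) :=
    tendsto_const_nhds.dist hlim
  refine le_of_tendsto h1 ?_
  filter_upwards [Filter.eventually_ge_atTop i] with k hk
  exact hx (φ k) (hmono (hk.trans (hφ.id_le k)) hi)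

/-- Collinear case. -/
theorem aux_line {E : Type*} [NormedAddCommGroup E] [NormedSpace ℝ E]
    [FiniteDimensional ℝ E] (S : Set E) (hS : IsClosed S) (hc : Convex ℝ S)
    (hne : S.Nonempty) (hb : ∃ a, S ⊆ closedBall a 1)
    (hcol : Collinear ℝ (ballHull S)) : ballHull S ⊆ S := by
  intro p hp
  by_contra hpS
  obtain ⟨a, ha⟩ := hb
  obtain ⟨b, hbS, hmin⟩ := hS.exists_infDist_eq_dist hne p
  have hbp : 0 < ‖p - b‖ := by
    rw [norm_pos_iff, sub_ne_zero]
    rintro rfl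
    exact hpS hbS
  set r := ‖p - b‖ with hr
  have hmin' : ∀ s ∈ S, r ≤ ‖p - s‖ := by
    intro s hs
    have := Metric.infDist_le_dist_of_mem (x := p) hs
    rw [hmin, dist_eq_norm, dist_eq_norm] at this
    exact this
  set u := r⁻¹ • (p - b) with hu
  have hun : ‖u‖ = 1 := by
    rw [hu, norm_smul, norm_inv, norm_norm]
    exact inv_mul_cancel₀ hbp.ne'
  have hpu : p - b = r • u := by rw [hu, smul_inv_smul₀ hbp.ne']
  have key : S ⊆ closedBall (b - u) 1 := by
    intro s hs
    have hcol3 : ∃ t : ℝ, s = b + t • u := by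
      obtain ⟨v, hv⟩ := (collinear_iff_of_mem (aux_subset_hull S hbS)).1 hcol
      obtain ⟨α, hα⟩ := hv s (aux_subset_hull S hs)
      obtain ⟨β, hβ⟩ := hv p hp
      simp only [vadd_eq_add] at hα hβ
      have hβv : β • v = r • u := by rw [← hpu, hβ]; abel
      have hβ0 : β ≠ 0 := by
        rintro rfl
        rw [zero_smul] at hβv
        have : ‖r • u‖ = 0 := by rw [← hβv, norm_zero]
        rw [norm_smul, hun, mul_one, Real.norm_eq_abs, abs_of_pos hbp] at this
        exact hbp.ne' this
      refine ⟨α * β⁻¹ * r, ?_⟩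
      rw [mul_smul, ← hβv, ← mul_smul, mul_assoc, inv_mul_cancel₀ hβ0, mul_one, hα, add_comm]
    obtain ⟨t, rfl⟩ := hcol3
    have ht2 : |t| ≤ 2 := by
      have h1 := ha hs
      have h2 := ha hbS
      have h3 := dist_triangle_right (b + t • u) b a
      rw [mem_closedBall] at h1 h2
      have : dist (b + t • u) b = |t| := by
        rw [dist_eq_norm, add_sub_cancel_left, norm_smul, hun, mul_one, Real.norm_eq_abs]
      linarith
    have ht0 : t ≤ 0 := by
      by_contra! htp
      by_cases htr : t ≤ r
      · have h := hmin' _ hs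
        have e : p - (b + t • u) = (r - t) • u := by rw [sub_smul, ← hpu]; abel
        rw [e, norm_smul, hun, mul_one, Real.norm_eq_abs, abs_of_nonneg (by linarith)] at h
        linarith
      · push Not at htr
        apply hpS
        have h := hc hbS hs (a := 1 - r / t) (b := r / t)
          (by rw [sub_nonneg, div_le_one htp]; exact htr.le) (by positivity) (by ring)
        have e : p = (1 - r / t) • b + (r / t) • (b + t • u) := by
          have : p = b + r • u := by rw [← hpu]; abel
          rw [smul_add, smul_smul, div_mul_cancel₀ _ htp.ne', ← add_assoc, ← add_smul]
          rw [this]; simp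
        rw [e]; exact h
    rw [mem_closedBall, dist_eq_norm]
    have e : b + t • u - (b - u) = (t + 1) • u := by rw [add_smul, one_smul]; abel
    rw [e, norm_smul, hun, mul_one, Real.norm_eq_abs]
    rw [abs_le] at ht2 ⊢
    constructor <;> linarith [ht2.1]
  have h := aux_mem_hull.1 hp _ key
  rw [mem_closedBall, dist_eq_norm] at h
  have e : p - (b - u) = (r + 1) • u := by rw [add_smul, one_smul, ← hpu]; abel
  rw [e, norm_smul, hun, mul_one, Real.norm_eq_abs, abs_of_pos (by linarith)] at h
  linarith

theorem aux_relint {E : Type*} [NormedAddCommGroup E] [NormedSpace ℝ E]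
    [FiniteDimensional ℝ E] [Nontrivial E]
    (C : ℕ → Set E) (hmono : Monotone C) (hne : (C 0).Nonempty)
    (hC : ∀ i, ballHull (C i) = C i) (V : Submodule ℝ E)
    (hV : V = (affineSpan ℝ (ballHull (⋃ i, C i))).direction)
    (hdim : Module.finrank ℝ E - 1 ≤ Module.finrank ℝ V)
    (p : E) (hp : p ∈ ballHull (⋃ i, C i)) (δ : ℝ) (hδ : 0 < δ)
    (hrel : ∀ v ∈ V, ‖v‖ < δ → p + v ∈ ballHull (⋃ i, C i)) : p ∈ ⋃ i, C i := by
  by_contra hpU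
  set K := ballHull (⋃ i, C i) with hK
  have hex : ∀ i, ∃ x, C i ⊆ closedBall x 1 ∧ 1 < ‖p - x‖ := by
    intro i
    have : p ∉ C i := fun h => hpU (mem_iUnion.2 ⟨i, h⟩)
    rw [← hC i, aux_mem_hull] at this
    push Not at this
    obtain ⟨x, h1, h2⟩ := this
    refine ⟨x, h1, ?_⟩
    rwa [mem_closedBall, dist_eq_norm, not_le] at h2
  choose x hx1 hx2 using hex
  obtain ⟨a, haU, φ, hφ, hlim⟩ := aux_limit C hmono hne x hx1
  have haK : ∀ y ∈ K, ‖y - a‖ ≤ 1 := fun y hy => by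
    rw [← dist_eq_norm]; exact aux_mem_hull.1 hy a haU
  have hpa : ‖p - a‖ = 1 := by
    refine le_antisymm (haK p hp) ?_
    have h1 : Filter.Tendsto (fun k => ‖p - (x ∘ φ) k‖) Filter.atTop (nhds ‖p - a‖) :=
      (tendsto_const_nhds.sub hlim).norm
    exact ge_of_tendsto' h1 fun k => (hx2 _).le
  obtain ⟨f, hf1, hf2⟩ := exists_dual_vector ℝ (p - a) (by
    intro h; rw [h] at hpa; exact zero_ne_one hpa)
  rw [hpa] at hf2
  have hf2' : f (p - a) = 1 := by simpa using hf2
  have hfle : ∀ y, f y ≤ ‖y‖ := fun y => by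
    have := f.le_opNorm y
    rw [hf1, one_mul] at this
    exact (le_abs_self _).trans this
  have hhalf : ∀ v ∈ V, f v ≤ 0 := by
    intro v hv
    set s := δ / (2 * (‖v‖ + 1)) with hs
    have hspos : 0 < s := by positivity
    have h1 : p + s • v ∈ K := by
      refine hrel _ (V.smul_mem s hv) ?_
      rw [norm_smul, Real.norm_eq_abs, abs_of_pos hspos, hs, div_mul_eq_mul_div,
        div_lt_iff₀ (by positivity)]
      nlinarith [norm_nonneg v]
    have h2 := (hfle _).trans (haK _ h1)
    have e : p + s • v - a = (p - a) + s • v := by abel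
    rw [e, map_add, map_smul, hf2', smul_eq_mul] at h2
    by_contra! h
    have := mul_pos hspos h
    linarith
  have hVf : ∀ v ∈ V, f v = 0 := fun v hv => by
    have h1 := hhalf v hv
    have h2 := hhalf (-v) (V.neg_mem hv)
    rw [map_neg] at h2
    linarith
  have hker : V = f.toLinearMap.ker := by
    apply Submodule.eq_of_le_of_finrank_le
    · intro v hv
      rw [LinearMap.mem_ker]; exact hVf v hv
    · have hr := f.toLinearMap.finrank_range_add_finrank_ker
      have hrange : f.toLinearMap.range = ⊤ := by
        rw [LinearMap.range_eq_top]
        intro c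
        refine ⟨c • (p - a), ?_⟩
        have : f (c • (p - a)) = c := by rw [map_smul, hf2', smul_eq_mul, mul_one]
        exact this
      rw [hrange, finrank_top, Module.finrank_self] at hr
      omega
  have hKV : ∀ y ∈ K, y - p ∈ V := fun y hy => by
    rw [hV]
    exact AffineSubspace.vsub_mem_direction (subset_affineSpan ℝ _ hy) (subset_affineSpan ℝ _ hp)
  have hflim : Filter.Tendsto (fun k => f ((x ∘ φ) k - a)) Filter.atTop (nhds 0) := by
    have : Filter.Tendsto (fun k => f ((x ∘ φ) k - a)) Filter.atTop (nhds (f (a - a))) :=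
      (f.continuous.tendsto _).comp (hlim.sub tendsto_const_nhds)
    rwa [sub_self, map_zero] at this
  have hw : Filter.Tendsto (fun k => (1 - f ((x ∘ φ) k - a))⁻¹ • (p - (x ∘ φ) k) - (p - a))
      Filter.atTop (nhds 0) := by
    have h1 : Filter.Tendsto (fun k => (1 - f ((x ∘ φ) k - a))⁻¹) Filter.atTop (nhds 1) := by
      have := (tendsto_const_nhds (x := (1 : ℝ)).sub hflim).inv₀ (by norm_num)
      simpa using this
    have h2 := (h1.smul (tendsto_const_nhds (x := p).sub hlim)).sub
      (tendsto_const_nhds (x := p - a))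
    simpa using h2
  have hev1 := hw.norm.eventually (eventually_lt_nhds (b := δ) (by simpa using hδ))
  have hev2 := hflim.eventually (eventually_lt_nhds (b := (1 : ℝ)) one_pos)
  obtain ⟨k, hk1, hk2⟩ := (hev1.and hev2).exists
  simp only [Function.comp] at hk1 hk2
  set y := x (φ k) with hy
  set ε := f (y - a) with hε
  have hε0 : 0 ≤ ε := by
    obtain ⟨c, hc⟩ := hne
    have hcK : c ∈ K := aux_subset_hull _ (mem_iUnion.2 ⟨0, hc⟩)
    have h1 := hVf _ (hKV c hcK)
    have h2 := hx1 (φ k) (hmono (Nat.zero_le _) hc)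
    rw [mem_closedBall, dist_eq_norm] at h2
    have h3 := (hfle _).trans h2
    have e : c - x (φ k) = (c - p) + (p - a) - (y - a) := by rw [← hy]; abel
    rw [e, map_sub, map_add, h1, hf2'] at h3
    linarith
  have hpos : 0 < 1 - ε := by linarith
  set w := (1 - ε)⁻¹ • (p - y) with hwdef
  have hfw : f w = 1 := by
    have e : p - y = (p - a) - (y - a) := by abel
    rw [hwdef, map_smul, e, map_sub, hf2', smul_eq_mul]
    exact inv_mul_cancel₀ hpos.ne'
  have hmem : w - (p - a) ∈ V := by
    rw [hker, LinearMap.mem_ker]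
    have : f (w - (p - a)) = 0 := by rw [map_sub, hfw, hf2', sub_self]
    exact this
  have hwK := haK _ (hrel _ hmem hk1)
  have e : p + (w - (p - a)) - a = w := by abel
  rw [e] at hwK
  have e2 : p - y = (1 - ε) • w := by rw [hwdef, smul_inv_smul₀ hpos.ne']
  have h := hx2 (φ k)
  rw [← hy, e2, norm_smul, Real.norm_eq_abs, abs_of_pos hpos] at h
  nlinarith [norm_nonneg w]

theorem aux_relint_exists {E : Type*} [NormedAddCommGroup E] [NormedSpace ℝ E]
    [FiniteDimensional ℝ E] (K : Set E) (hK : Convex ℝ K) (hne : K.Nonempty) :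
    ∃ p ∈ K, ∃ δ > 0, ∀ v ∈ (affineSpan ℝ K).direction, ‖v‖ < δ → p + v ∈ K := by
  obtain ⟨p, hp⟩ := hne.intrinsicInterior hK
  have hpK := intrinsicInterior_subset hp
  rw [mem_intrinsicInterior] at hp
  obtain ⟨q, hq, rfl⟩ := hp
  rw [mem_interior_iff_mem_nhds, Metric.mem_nhds_iff] at hq
  obtain ⟨δ, hδ, hball⟩ := hq
  refine ⟨q, hpK, δ, hδ, ?_⟩
  intro v hv hvδ
  have hm : (q : E) + v ∈ affineSpan ℝ K := by
    have := AffineSubspace.vadd_mem_of_mem_direction hv q.2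
    rwa [vadd_eq_add, add_comm] at this
  have : (⟨(q : E) + v, hm⟩ : affineSpan ℝ K) ∈ ball q δ := by
    rw [mem_ball, Subtype.dist_eq, dist_eq_norm]
    simpa using hvδ
  exact hball this

theorem stmt_13 {E : Type*} [NormedAddCommGroup E] [NormedSpace ℝ E]
    [FiniteDimensional ℝ E] [Nontrivial E]
    (C : ℕ → Set E) (hmono : Monotone C) (hbody : ∀ i, IsBConvexBody (C i))
    (hdim : Module.finrank ℝ (affineSpan ℝ (ballHull (⋃ i, C i))).direction ∈
      ({0, 1, Module.finrank ℝ E - 1, Module.finrank ℝ E} : Set ℕ)) :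
    closure (⋃ i, C i) = ballHull (⋃ i, C i) ∧
      IsBConvexBody (closure (⋃ i, C i)) := by
  have hne : (C 0).Nonempty := (hbody 0).2.1
  have hC : ∀ i, ballHull (C i) = C i := fun i => (hbody i).2.2
  have hex : ∀ i, ∃ x, C i ⊆ closedBall x 1 := by
    intro i
    by_contra! h
    have hu : C i = univ := by
      rw [← hC i]
      exact eq_univ_of_forall fun p => aux_mem_hull.2 fun x hx => absurd hx (h x)
    have hb := (hbody i).1
    rw [hu] at hb
    exact NormedSpace.unbounded_univ ℝ E hb
  choose x hx using hex
  obtain ⟨a, haU, -⟩ := aux_limit C hmono hne x hx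
  set U := ⋃ i, C i with hU
  have hUne : U.Nonempty := hne.mono (subset_iUnion C 0)
  have hsub : closure U ⊆ ballHull U := closure_minimal (aux_subset_hull U) (aux_closed U)
  have hhull : ballHull (closure U) = ballHull U := by
    ext p
    rw [aux_mem_hull, aux_mem_hull]
    refine forall_congr' fun y => ?_
    rw [isClosed_closedBall.closure_subset_iff]
  have hUconv : Convex ℝ U := by
    refine Directed.convex_iUnion hmono.directed_le fun i => ?_
    rw [← hC i]; exact aux_convex _
  have main : ballHull U ⊆ closure U := by
    have hcase : Module.finrank ℝ (affineSpan ℝ (ballHull U)).direction ≤ 1 ∨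
        Module.finrank ℝ E - 1 ≤ Module.finrank ℝ (affineSpan ℝ (ballHull U)).direction := by
      simp only [mem_insert_iff, mem_singleton_iff] at hdim
      omega
    rcases hcase with h | h
    · rw [← hhull]
      apply aux_line _ isClosed_closure hUconv.closure hUne.closure
        ⟨a, closure_minimal haU isClosed_closedBall⟩
      rw [hhull, collinear_iff_finrank_le_one, ← direction_affineSpan]
      exact h
    · obtain ⟨p0, hp0, δ, hδ, hrel⟩ := aux_relint_exists (ballHull U) (aux_convex U)
        (hUne.mono (aux_subset_hull U))
      intro q hq
      have hin : ∀ t : ℝ, 0 < t → t ≤ 1 → (1 - t) • q + t • p0 ∈ U := by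
        intro t ht ht1
        refine aux_relint C hmono hne hC _ rfl h _
          (aux_convex U hq hp0 (by linarith) ht.le (by ring)) (t * δ) (by positivity) ?_
        intro v hv hvn
        have hv' : p0 + t⁻¹ • v ∈ ballHull U := by
          refine hrel _ (Submodule.smul_mem _ _ hv) ?_
          rw [norm_smul, norm_inv, Real.norm_eq_abs, abs_of_pos ht, inv_mul_lt_iff₀ ht]
          exact hvn
        have := aux_convex U hq hv' (a := 1 - t) (b := t) (by linarith) ht.le (by ring)
        rwa [smul_add, smul_inv_smul₀ ht.ne', ← add_assoc] at this
      have hlim : Filter.Tendsto (fun n : ℕ => (1 - 1 / ((n : ℝ) + 1)) • q +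
          (1 / ((n : ℝ) + 1)) • p0) Filter.atTop (nhds q) := by
        have h0 := tendsto_one_div_add_atTop_nhds_zero_nat (𝕜 := ℝ)
        have h1 := ((tendsto_const_nhds (x := (1 : ℝ)).sub h0).smul
          (tendsto_const_nhds (x := q))).add (h0.smul (tendsto_const_nhds (x := p0)))
        simpa using h1
      refine mem_closure_of_tendsto hlim (Filter.Eventually.of_forall fun n => hin _ ?_ ?_)
      · positivity
      · rw [div_le_one (by positivity)]
        linarith [Nat.cast_nonneg (α := ℝ) n]
  have heq := hsub.antisymm main
  refine ⟨heq, ?_, hUne.closure, ?_⟩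
  · exact (isBounded_closedBall.subset haU).closure
  · rw [hhull, heq]
end

section
/- Let S be a nonempty subset of a Minkowski space of dimension n such that the dimension of the affine hull of bh₁(S) belongs to {0, 1, n−1, n}. Then bh₁(S) = cl(⋃ {bh₁(F) : F ⊆ S finite}), i.e., the ball hull of S is the closure of the union of the ball hulls of all finite subsets of S. -/
open Metric Set

section aux
variable {E : Type*} [NormedAddCommGroup E]

lemma mem_bh {S : Set E} {y : E} :
    y ∈ ballHull S ↔ ∀ x, (∀ s ∈ S, ‖x - s‖ ≤ 1) → ‖x - y‖ ≤ 1 := by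
  simp only [ballHull, mem_iInter, mem_setOf_eq, mem_closedBall, Set.subset_def, dist_eq_norm]
  constructor
  · intro h x hx
    rw [norm_sub_rev]
    exact h x (fun s hs => by rw [norm_sub_rev]; exact hx s hs)
  · intro h x hx
    rw [norm_sub_rev]
    exact h x (fun s hs => by rw [norm_sub_rev]; exact hx s hs)

lemma subset_bh (S : Set E) : S ⊆ ballHull S := fun y hy => mem_bh.2 fun _ hx => hx y hy

lemma bh_mono {S T : Set E} (h : S ⊆ T) : ballHull S ⊆ ballHull T := fun _ hy =>
  mem_bh.2 fun x hx => mem_bh.1 hy x fun s hs => hx s (h hs)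

lemma bh_closed (S : Set E) : IsClosed (ballHull S) :=
  isClosed_biInter fun _ _ => isClosed_closedBall

variable [NormedSpace ℝ E]

lemma bh_convex (S : Set E) : Convex ℝ (ballHull S) :=
  convex_iInter₂ fun x _ => convex_closedBall x 1

/-- Low-dimensional case. -/
lemma low_case (S : Set E) (hS : S.Nonempty) (hC : ∃ x, ∀ s ∈ S, ‖x - s‖ ≤ 1)
    [FiniteDimensional ℝ E]
    (hd : Module.finrank ℝ (affineSpan ℝ (ballHull S)).direction ≤ 1) :
    ballHull S ⊆ closure (convexHull ℝ S) := by
  intro y hy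
  by_contra hyn
  obtain ⟨f, c, hfc, hcy⟩ := geometric_hahn_banach_closed_point
    (convex_convexHull ℝ S).closure isClosed_closure hyn
  have hfs : ∀ s ∈ S, f s < c := fun s hs => hfc s (subset_closure (subset_convexHull ℝ S hs))
  obtain ⟨s0, hs0⟩ := hS
  have hpos : 0 < f (y - s0) := by rw [map_sub]; linarith [hfs s0 hs0]
  obtain ⟨v0, hv0⟩ := finrank_le_one_iff.1 hd
  have hmem : ∀ p ∈ ballHull S, ∀ q ∈ ballHull S, ∃ r : ℝ, r • (v0 : E) = p - q := by
    intro p hp q hq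
    have h1 : p - q ∈ (affineSpan ℝ (ballHull S)).direction :=
      AffineSubspace.vsub_mem_direction (subset_affineSpan ℝ _ hp) (subset_affineSpan ℝ _ hq)
    obtain ⟨r, hr⟩ := hv0 ⟨_, h1⟩
    exact ⟨r, by simpa using congrArg Subtype.val hr⟩
  obtain ⟨r0, hr0⟩ := hmem y hy s0 (subset_bh S hs0)
  set w : E := (f y - c) • (y - s0) with hw
  have hshift : ∀ x, (∀ s ∈ S, ‖x - s‖ ≤ 1) →
      ∀ s ∈ S, ‖(x - (f (y - s0))⁻¹ • w) - s‖ ≤ 1 := by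
    intro x hx s hs
    have hyx := mem_bh.1 hy x hx
    have key : s + (f (y - s0))⁻¹ • w ∈ ballHull S := by
      obtain ⟨r, hr⟩ := hmem y hy s (subset_bh S hs)
      have h0 : r0 * f v0 = f (y - s0) := by rw [← hr0]; simp
      have h1 : r * f v0 = f (y - s) := by rw [← hr]; simp
      have hps : 0 < f (y - s) := by rw [map_sub]; linarith [hfs s hs]
      have hv : f (v0 : E) ≠ 0 := by
        intro h; rw [h] at h0; linarith
      have hr0' : r0 ≠ 0 := by
        intro h; rw [h] at h0; linarith
      have hrr : r ≠ 0 := by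
        intro h; rw [h] at h1; linarith
      have e : (f (y - s0))⁻¹ • w = ((f y - c) / f (y - s)) • (y - s) := by
        rw [hw, ← hr0, ← hr, map_smul, map_smul, smul_smul, smul_smul, smul_smul]
        congr 1
        simp only [smul_eq_mul]
        field_simp
      rw [e]
      apply (bh_convex S).add_smul_sub_mem (subset_bh S hs) hy
      constructor
      · apply div_nonneg <;> linarith
      · rw [div_le_one hps, map_sub]; linarith [hfs s hs]
    have := mem_bh.1 key x hx
    rwa [sub_sub, add_comm]
  obtain ⟨x, hx⟩ := hC
  set u : E := (f (y - s0))⁻¹ • w with hu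
  have hit : ∀ k : ℕ, ∀ s ∈ S, ‖(x - (k : ℝ) • u) - s‖ ≤ 1 := by
    intro k
    induction k with
    | zero => simpa using hx
    | succ k ih =>
      have := hshift _ ih
      intro s hs
      have h2 := this s hs
      rw [sub_sub x] at h2
      push_cast
      rwa [add_smul, one_smul]
  have hune : u ≠ 0 := by
    intro h
    have : f u = f y - c := by
      rw [hu, hw]; simp only [map_smul, smul_eq_mul]; field_simp
    rw [h, map_zero] at this
    linarith
  have hup : 0 < ‖u‖ := norm_pos_iff.2 hune
  obtain ⟨k, hk⟩ := exists_nat_gt (2 / ‖u‖)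
  have h1 := hit k s0 hs0
  have h2 := hx s0 hs0
  have h3 : (k : ℝ) * ‖u‖ ≤ 2 := by
    calc (k : ℝ) * ‖u‖ = ‖(k : ℝ) • u‖ := by rw [norm_smul (k : ℝ) u, Real.norm_natCast]
      _ = ‖(x - s0) - ((x - (k : ℝ) • u) - s0)‖ := by congr 1; abel
      _ ≤ ‖x - s0‖ + ‖(x - (k : ℝ) • u) - s0‖ := norm_sub_le _ _
      _ ≤ 2 := by linarith
  rw [div_lt_iff₀ hup] at hk
  linarith

lemma high_point [FiniteDimensional ℝ E] (S : Set E) (hS : S.Nonempty)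
    (hd : Module.finrank ℝ E - 1 ≤ Module.finrank ℝ (affineSpan ℝ (ballHull S)).direction)
    (y : E) (δ : ℝ) (hδ : 0 < δ)
    (hy : ∀ w ∈ (affineSpan ℝ (ballHull S)).direction, ‖w‖ ≤ δ → y + w ∈ ballHull S) :
    ∃ F : Set E, F ⊆ S ∧ F.Finite ∧ y ∈ ballHull F := by
  obtain ⟨s0, hs0⟩ := hS
  have hyK : y ∈ ballHull S := by simpa using hy 0 (Submodule.zero_mem _) (by simpa using hδ.le)
  have main : ∃ F : Set E, F ⊆ S ∧ F.Finite ∧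
      ∀ x ∈ closedBall s0 1, (∀ s ∈ F, ‖x - s‖ ≤ 1) → ‖x - y‖ ≤ 1 := by
    refine (isCompact_closedBall s0 1).induction_on
      (p := fun A => ∃ F : Set E, F ⊆ S ∧ F.Finite ∧
        ∀ x ∈ A, (∀ s ∈ F, ‖x - s‖ ≤ 1) → ‖x - y‖ ≤ 1) ?_ ?_ ?_ ?_
    · exact ⟨∅, by simp, by simp, by simp⟩
    · rintro A B hAB ⟨F, h1, h2, h3⟩
      exact ⟨F, h1, h2, fun x hx => h3 x (hAB hx)⟩
    · rintro A B ⟨F, h1, h2, h3⟩ ⟨G, g1, g2, g3⟩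
      refine ⟨F ∪ G, union_subset h1 g1, h2.union g2, ?_⟩
      rintro x (hx | hx) h
      · exact h3 x hx fun s hs => h s (Or.inl hs)
      · exact g3 x hx fun s hs => h s (Or.inr hs)
    · intro x _
      by_cases hxC : ∀ s ∈ S, ‖x - s‖ ≤ 1
      swap
      · push Not at hxC
        obtain ⟨s, hs, hxs⟩ := hxC
        refine ⟨{z | 1 < ‖z - s‖}, mem_nhdsWithin_of_mem_nhds
          ((isOpen_lt continuous_const (by fun_prop)).mem_nhds hxs), {s}, by simpa, by simp, ?_⟩
        intro z hz h
        exact absurd (h s rfl) (not_le.2 hz)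
      rcases (mem_bh.1 hyK x hxC).lt_or_eq with hlt | heq
      · refine ⟨{z | ‖z - y‖ < 1}, mem_nhdsWithin_of_mem_nhds
          ((isOpen_lt (by fun_prop) continuous_const).mem_nhds hlt), ∅, by simp, by simp, ?_⟩
        intro z hz _
        exact le_of_lt hz
      obtain ⟨g, hg1, hgx⟩ := exists_dual_vector ℝ (x - y) (by rw [← norm_pos_iff, heq]; norm_num)
      rw [heq] at hgx
      replace hgx : g (x - y) = 1 := by simpa using hgx
      have hgle : ∀ z, ‖z‖ ≤ 1 → g z ≤ 1 := fun z hz => by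
        have := g.le_opNorm z
        rw [hg1, one_mul] at this
        exact (le_abs_self _).trans (this.trans hz)
      set V := (affineSpan ℝ (ballHull S)).direction with hV
      have hnn : ∀ w ∈ V, ‖w‖ ≤ δ → 0 ≤ g w := by
        intro w hw hwδ
        have h1 := mem_bh.1 (hy w hw hwδ) x hxC
        have h2 := hgle _ h1
        rw [← sub_sub, map_sub, hgx] at h2
        linarith
      have hnn' : ∀ w ∈ V, 0 ≤ g w := by
        intro w hw
        by_cases h0 : w = 0
        · simp [h0]
        have hp : 0 < ‖w‖ := norm_pos_iff.2 h0
        have h1 := hnn ((δ / ‖w‖) • w) (V.smul_mem _ hw) (by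
          rw [norm_smul, Real.norm_of_nonneg (by positivity)]
          field_simp; rfl)
        rw [map_smul, smul_eq_mul] at h1
        exact nonneg_of_mul_nonneg_right h1 (by positivity)
      have hz : ∀ w ∈ V, g w = 0 := fun w hw => by
        have := hnn' (-w) (V.neg_mem hw)
        rw [map_neg] at this
        linarith [hnn' w hw]
      have hVk : V = LinearMap.ker (g : E →ₗ[ℝ] ℝ) := by
        apply Submodule.eq_of_le_of_finrank_le
        · intro w hw
          simpa using hz w hw
        · have h1 := LinearMap.finrank_range_add_finrank_ker (g : E →ₗ[ℝ] ℝ)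
          have h2 : LinearMap.range (g : E →ₗ[ℝ] ℝ) = ⊤ := by
            apply LinearMap.range_eq_top.2
            intro r
            exact ⟨r • (x - y), by simp only [ContinuousLinearMap.coe_coe, map_smul, hgx]; simp⟩
          rw [h2, finrank_top, Module.finrank_self] at h1
          omega
      have hopen1 : IsOpen {z : E | (1/2 : ℝ) < g (z - y)} :=
        isOpen_lt continuous_const (by fun_prop)
      have hopen2 : IsOpen {z : E | ‖(z - y) - g (z - y) • (x - y)‖ < δ / 2} :=
        isOpen_lt (by fun_prop) continuous_const
      refine ⟨{z : E | (1/2 : ℝ) < g (z - y)} ∩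
        {z : E | ‖(z - y) - g (z - y) • (x - y)‖ < δ / 2}, mem_nhdsWithin_of_mem_nhds
          ((hopen1.inter hopen2).mem_nhds ⟨?_, ?_⟩), {s0}, by simpa, by simp, ?_⟩
      · simp only [mem_setOf_eq, hgx]; norm_num
      · simp only [mem_setOf_eq, hgx]; simpa using hδ
      · rintro z ⟨hz1, hz2⟩ hzs
        simp only [mem_setOf_eq] at hz1 hz2
        have hzs0 := hgle _ (hzs s0 rfl)
        have hs0y : g (s0 - y) = 0 := hz _ (AffineSubspace.vsub_mem_direction
          (subset_affineSpan ℝ _ (subset_bh S hs0)) (subset_affineSpan ℝ _ hyK))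
        have hα : g (z - y) ≤ 1 := by
          have : z - y = (z - s0) + (s0 - y) := by abel
          rw [this, map_add, hs0y]; linarith
        set α := g (z - y) with hαd
        have hαp : 0 < α := by linarith
        set w := (z - y) - α • (x - y) with hw
        have hwV : w ∈ V := by
          rw [hVk]
          simp only [LinearMap.mem_ker, ContinuousLinearMap.coe_coe]
          rw [hw, map_sub, map_smul, hgx, ← hαd]; simp
        have hK := hy (-(α⁻¹ • w)) (V.neg_mem (V.smul_mem _ hwV)) (by
          rw [norm_neg, norm_smul, Real.norm_of_nonneg (by positivity), inv_mul_le_iff₀ hαp]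
          nlinarith)
        have h1 := mem_bh.1 hK x hxC
        have h2 : z - y = α • (x - (y + -(α⁻¹ • w))) := by
          have : x - (y + -(α⁻¹ • w)) = (x - y) + α⁻¹ • w := by abel
          rw [this, smul_add, smul_smul, mul_inv_cancel₀ hαp.ne', one_smul, hw]; abel
        rw [h2, norm_smul, Real.norm_of_nonneg hαp.le]
        nlinarith [norm_nonneg (x - (y + -(α⁻¹ • w)))]
  obtain ⟨F, h1, h2, h3⟩ := main
  refine ⟨insert s0 F, insert_subset hs0 h1, h2.insert _, mem_bh.2 ?_⟩
  intro x hx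
  refine h3 x ?_ fun s hs => hx s (mem_insert_of_mem _ hs)
  rw [mem_closedBall, dist_eq_norm]
  exact hx s0 (mem_insert _ _)

lemma exists_relint [FiniteDimensional ℝ E] (K : Set E) (hK : Convex ℝ K) (hne : K.Nonempty) :
    ∃ y ∈ K, ∃ δ : ℝ, 0 < δ ∧ ∀ w ∈ (affineSpan ℝ K).direction, ‖w‖ ≤ δ → y + w ∈ K := by
  obtain ⟨y, hy⟩ := hne.intrinsicInterior hK
  refine ⟨y, intrinsicInterior_subset hy, ?_⟩
  obtain ⟨z, hz, rfl⟩ := mem_intrinsicInterior.1 hy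
  rw [mem_interior_iff_mem_nhds, Metric.mem_nhds_iff] at hz
  obtain ⟨ε, hε, hb⟩ := hz
  refine ⟨ε / 2, by positivity, fun w hw hwn => ?_⟩
  have hm : (z : E) + w ∈ affineSpan ℝ K := by
    rw [add_comm]; exact AffineSubspace.vadd_mem_of_mem_direction hw z.2
  have : (⟨(z : E) + w, hm⟩ : affineSpan ℝ K) ∈ ball z ε := by
    rw [mem_ball, Subtype.dist_eq, dist_eq_norm]
    simp only [add_sub_cancel_left]
    linarith
  exact hb this

lemma high_case [FiniteDimensional ℝ E] (S : Set E) (hS : S.Nonempty)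
    (hd : Module.finrank ℝ E - 1 ≤ Module.finrank ℝ (affineSpan ℝ (ballHull S)).direction) :
    ballHull S ⊆ closure (⋃ F ∈ {F : Set E | F ⊆ S ∧ F.Finite}, ballHull F) := by
  intro k hk
  obtain ⟨y, hyK, δ, hδ, hy⟩ := exists_relint (ballHull S) (bh_convex S) ⟨k, hk⟩
  have hlim : Filter.Tendsto (fun t : ℝ => k + t • (y - k)) (nhdsWithin 0 (Ioi 0)) (nhds k) := by
    have : Continuous (fun t : ℝ => k + t • (y - k)) := by fun_prop
    have h := this.tendsto 0
    simp only [zero_smul, add_zero] at h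
    exact h.mono_left nhdsWithin_le_nhds
  refine mem_closure_of_tendsto hlim ?_
  filter_upwards [Ioc_mem_nhdsGT (zero_lt_one (α := ℝ))] with t ht
  obtain ⟨F, h1, h2, h3⟩ := high_point S hS hd (k + t • (y - k)) (t * δ) (mul_pos ht.1 hδ) (by
    intro w hw hwn
    have h4 := hy (t⁻¹ • w) (Submodule.smul_mem _ _ hw) (by
      rw [norm_smul, Real.norm_of_nonneg (inv_nonneg.2 ht.1.le), inv_mul_le_iff₀ ht.1]
      exact hwn)
    have h5 := (bh_convex S).add_smul_sub_mem hk h4 ⟨ht.1.le, ht.2⟩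
    have h6 : k + t • (y - k) + w = k + t • (y + t⁻¹ • w - k) := by
      have : y + t⁻¹ • w - k = (y - k) + t⁻¹ • w := by abel
      rw [this, smul_add, smul_smul, mul_inv_cancel₀ ht.1.ne', one_smul, add_assoc]
    rwa [h6])
  exact mem_biUnion (show F ∈ {F : Set E | F ⊆ S ∧ F.Finite} from ⟨h1, h2⟩) h3

end aux

theorem stmt_14 {E : Type*} [NormedAddCommGroup E] [NormedSpace ℝ E]
    [FiniteDimensional ℝ E] [Nontrivial E]
    (S : Set E) (hS : S.Nonempty)
    (hdim : Module.finrank ℝ (affineSpan ℝ (ballHull S)).direction ∈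
      ({0, 1, Module.finrank ℝ E - 1, Module.finrank ℝ E} : Set ℕ)) :
    ballHull S = closure (⋃ F ∈ {F : Set E | F ⊆ S ∧ F.Finite}, ballHull F) := by
  apply Subset.antisymm
  · by_cases hd : Module.finrank ℝ E - 1 ≤
      Module.finrank ℝ (affineSpan ℝ (ballHull S)).direction
    · exact high_case S hS hd
    have hd1 : Module.finrank ℝ (affineSpan ℝ (ballHull S)).direction ≤ 1 := by
      simp only [mem_insert_iff, mem_singleton_iff] at hdim
      omega
    have hC : ∃ x, ∀ s ∈ S, ‖x - s‖ ≤ 1 := by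
      by_contra hC
      have : ballHull S = univ := eq_univ_of_forall fun y => mem_bh.2 fun x hx => absurd ⟨x, hx⟩ hC
      apply hd
      rw [this, AffineSubspace.span_univ, AffineSubspace.direction_top, finrank_top]
      omega
    refine (low_case S hS hC hd1).trans (closure_mono ?_)
    rw [convexHull_eq_union_convexHull_finite_subsets]
    intro y hy
    simp only [mem_iUnion] at hy
    obtain ⟨F, hF, hyF⟩ := hy
    exact mem_biUnion (show (F : Set E) ∈ {F : Set E | F ⊆ S ∧ F.Finite} from
      ⟨hF, F.finite_toSet⟩) (convexHull_min (subset_bh _) (bh_convex _) hyF)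
  · exact closure_minimal (iUnion₂_subset fun F hF => bh_mono hF.1) (bh_closed S)
end

section
/- Let K be a b-bounded b-convex body in a Minkowski space and let S ⊆ K. Then bh₁(S) = K if and only if every exposed b-face of K meets cl(S). -/
open Metric Set

theorem stmt_15 {E : Type*} [NormedAddCommGroup E] [NormedSpace ℝ E]
    [FiniteDimensional ℝ E] [Nontrivial E]
    (K : Set E) (hK : IsBConvexBody K) (hbb : circumradius K < 1)
    (S : Set E) (hS : S ⊆ K) :
    ballHull S = K ↔ ∀ F : Set E, IsExposedBFace K F → (F ∩ closure S).Nonempty := by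
  obtain ⟨hKb, hKne, hKh⟩ := hK
  have hKcl : IsClosed K := by
    rw [← hKh]
    exact isClosed_biInter fun x _ => isClosed_closedBall
  have hKc : IsCompact K := Metric.isCompact_of_isClosed_isBounded hKcl hKb
  have hclS : closure S ⊆ K := closure_minimal hS hKcl
  constructor
  · rintro h F ⟨y, hy, ⟨p, hpK, hpy⟩, rfl⟩
    by_contra hne
    have hlt : ∀ s ∈ closure S, dist s y < 1 := by
      intro s hs
      refine lt_of_le_of_ne (hy (hclS hs)) fun he => hne ⟨s, ⟨hclS hs, he⟩, hs⟩
    have hε : ∃ ε : ℝ, 0 < ε ∧ ∀ s ∈ closure S, dist s y ≤ 1 - ε := by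
      rcases (closure S).eq_empty_or_nonempty with h0 | h0
      · exact ⟨1, one_pos, by simp [h0]⟩
      · obtain ⟨m, hm, hmax⟩ := (hKc.of_isClosed_subset isClosed_closure hclS).exists_isMaxOn h0
          (f := fun s => dist s y) (by fun_prop)
        refine ⟨1 - dist m y, by linarith [hlt m hm], fun s hs => ?_⟩
        have : dist s y ≤ dist m y := hmax hs
        linarith
    obtain ⟨ε, hε0, hε⟩ := hε
    have hpn : ‖p - y‖ = 1 := by rw [← dist_eq_norm]; exact hpy
    have hsub : S ⊆ closedBall (y - ε • (p - y)) 1 := by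
      intro s hs
      have h1 := hε s (subset_closure hs)
      have h2 : dist y (y - ε • (p - y)) = ε := by
        rw [dist_eq_norm, sub_sub_cancel, norm_smul, hpn, Real.norm_of_nonneg hε0.le, mul_one]
      have := dist_triangle s y (y - ε • (p - y))
      rw [mem_closedBall]
      linarith
    rw [← h] at hpK
    have hp := mem_iInter₂.1 hpK _ hsub
    have h3 : p - (y - ε • (p - y)) = (1 + ε) • (p - y) := by module
    rw [mem_closedBall, dist_eq_norm, h3, norm_smul, hpn, Real.norm_of_nonneg (by linarith)] at hp
    linarith
  · intro h
    apply Subset.antisymm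
    · intro z hz
      rw [← hKh]
      exact mem_iInter₂.2 fun x hx => mem_iInter₂.1 hz x (hS.trans hx)
    · intro k hk
      refine mem_iInter₂.2 fun x hx => ?_
      by_contra hkx
      have hkx : 1 < dist k x := by simpa using hkx
      have hrne : {r : ℝ | 0 ≤ r ∧ ∃ x : E, K ⊆ closedBall x r}.Nonempty := by
        obtain ⟨r, hr⟩ := hKb.subset_closedBall (0 : E)
        exact ⟨max r 0, le_max_right _ _, 0,
          hr.trans (closedBall_subset_closedBall (le_max_left _ _))⟩
      obtain ⟨r, ⟨hr0, c, hc⟩, hr1⟩ := exists_lt_of_csInf_lt hrne hbb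
      let g : ℝ → E → ℝ := fun t z => dist z ((1 - t) • c + t • x)
      have hg : Continuous (Function.uncurry g) := by
        simp only [g, Function.uncurry_def]
        fun_prop
      have hcont : Continuous fun t => sSup (g t '' K) := hKc.continuous_sSup hg
      have hgt : ∀ t, Continuous (g t) := fun t => by simp only [g]; fun_prop
      have hbdd : ∀ t, BddAbove (g t '' K) := fun t => (hKc.image (hgt t)).bddAbove
      have hle0 : sSup (g 0 '' K) ≤ 1 := by
        apply csSup_le (hKne.image _)
        rintro _ ⟨z, hz, rfl⟩
        have := hc hz
        simp only [g, sub_zero, one_smul, zero_smul, add_zero]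
        exact (mem_closedBall.1 this).trans hr1.le
      have hge1 : 1 ≤ sSup (g 1 '' K) := by
        refine le_trans ?_ (le_csSup (hbdd 1) (mem_image_of_mem _ hk))
        simpa [g] using hkx.le
      obtain ⟨t, ⟨ht0, ht1⟩, ht⟩ := intermediate_value_Icc (zero_le_one' ℝ)
        hcont.continuousOn ⟨hle0, hge1⟩
      have ht : sSup (g t '' K) = 1 := ht
      have hKt : K ⊆ closedBall ((1 - t) • c + t • x) 1 := by
        intro z hz
        exact (le_csSup (hbdd t) (mem_image_of_mem (g t) hz)).trans ht.le
      have htne : t ≠ 1 := by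
        rintro rfl
        have := hKt hk
        simp at this
        linarith
      have htlt : t < 1 := lt_of_le_of_ne ht1 htne
      obtain ⟨m, hm, hme⟩ := (hKc.image (hgt t)).sSup_mem (hKne.image _)
      obtain ⟨s, ⟨hsK, hsy⟩, hs⟩ := h _ ⟨_, hKt, ⟨m, hm, hme.trans ht⟩, rfl⟩
      have hsx : dist s x ≤ 1 := closure_minimal hx isClosed_closedBall hs
      have hsc : dist s c ≤ r := hc hsK
      have hsy : dist s ((1 - t) • c + t • x) = 1 := hsy
      have h3 : s - ((1 - t) • c + t • x) = (1 - t) • (s - c) + t • (s - x) := by module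
      rw [dist_eq_norm] at hsx hsc hsy
      rw [h3] at hsy
      have h4 := norm_add_le ((1 - t) • (s - c)) (t • (s - x))
      rw [hsy, norm_smul, norm_smul, Real.norm_of_nonneg ht0,
        Real.norm_of_nonneg (by linarith)] at h4
      have h5 : (1 - t) * ‖s - c‖ ≤ (1 - t) * r := by gcongr
      have h6 : t * ‖s - x‖ ≤ t * 1 := by gcongr
      nlinarith
end

section
/- Let K be a b-bounded b-convex body in a Minkowski space with strictly convex norm, and let S ⊆ K. Then bh₁(S) = K if and only if b-exp(K) ⊆ cl(S). In particular, K = bh₁(b-exp(K)). -/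
open Metric Set

theorem aux_key {E : Type*} [NormedAddCommGroup E] [NormedSpace ℝ E]
    [FiniteDimensional ℝ E] [Nontrivial E] [StrictConvexSpace ℝ E]
    (K : Set E) (hK : IsCompact K) (hne : K.Nonempty) (c : E) (r : ℝ) (hr : r < 1)
    (hc : K ⊆ closedBall c r) (z : E) (hz : bExp K ⊆ closedBall z 1) :
    K ⊆ closedBall z 1 := by
  have hr' : ∀ x ∈ K, ‖x - c‖ ≤ r := fun x hx => by
    have := hc hx
    rwa [mem_closedBall, dist_eq_norm] at this
  set C : Set E := {v | ∀ x ∈ K, ‖v - (x - c)‖ ≤ 1} with hC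
  have hCeq : C = ⋂ x ∈ K, closedBall (x - c) 1 := by
    ext v; simp [hC, dist_eq_norm]
  have hconv : Convex ℝ C := by
    rw [hCeq]
    exact convex_iInter₂ fun x _ => convex_closedBall _ _
  have hclosed : IsClosed C := by
    rw [hCeq]
    exact isClosed_biInter fun x _ => isClosed_closedBall
  have h0 : C ∈ nhds (0 : E) := by
    rw [Metric.mem_nhds_iff]
    refine ⟨1 - r, by linarith, fun v hv x hx => ?_⟩
    rw [mem_ball_zero_iff] at hv
    have h1 := norm_sub_le v (x - c)
    have h2 := hr' x hx
    linarith
  have hle : ∀ v, gauge C v ≤ 1 ↔ v ∈ C := fun v => by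
    rw [gauge_le_one_iff_mem_closure hconv h0, hclosed.closure_eq]
  have hcont : Continuous (gauge C) := continuous_gauge hconv h0
  by_contra hcon
  have hzC : 1 < gauge C (z - c) := by
    by_contra h
    have h1 := (hle _).1 (not_lt.1 h)
    apply hcon
    intro x hx
    have h2 := h1 x hx
    rw [mem_closedBall, dist_comm, dist_eq_norm]
    rw [show z - x = z - c - (x - c) by abel]
    exact h2
  obtain ⟨k, hk⟩ := hconv.lipschitz_gauge h0
  have hdense : Dense {w | DifferentiableAt ℝ (gauge C) w} := by
    borelize E
    exact MeasureTheory.Measure.dense_of_ae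
      (hk.ae_differentiableAt (μ := MeasureTheory.Measure.addHaar))
  have hopen : IsOpen ({w | ‖(z - c) - w‖ < (gauge C w - 1) * (1 - r)}) :=
    isOpen_lt (by fun_prop) (by fun_prop)
  obtain ⟨w, hw, hwd⟩ := hdense.inter_open_nonempty _ hopen
    ⟨z - c, by simp only [mem_ofPred_eq, sub_self, norm_zero]; nlinarith⟩
  simp only [mem_ofPred_eq] at hw hwd
  have hg1 : 1 < gauge C w := by
    have := norm_nonneg ((z - c) - w)
    by_contra h
    nlinarith
  set g := gauge C w with hg
  have hg0 : 0 < g := by linarith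
  set y := g⁻¹ • w with hy
  have hwy : w = g • y := by rw [hy, smul_inv_smul₀ hg0.ne']
  have hgy : gauge C y = 1 := by
    rw [hy, gauge_smul_of_nonneg (by positivity), smul_eq_mul, ← hg, inv_mul_cancel₀ hg0.ne']
  have hyC : y ∈ C := (hle y).1 hgy.le
  -- contact point
  obtain ⟨x, hx, hxmax⟩ := hK.exists_isMaxOn hne
    (f := fun x => ‖y - (x - c)‖) (by fun_prop)
  have hx1 : ‖y - (x - c)‖ = 1 := by
    refine le_antisymm (hyC x hx) ?_
    by_contra h
    push Not at h
    have : y ∈ interior C := by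
      rw [mem_interior_iff_mem_nhds, Metric.mem_nhds_iff]
      refine ⟨1 - ‖y - (x - c)‖, by linarith, fun v hv x' hx' => ?_⟩
      rw [mem_ball, dist_eq_norm] at hv
      have h1 : ‖y - (x' - c)‖ ≤ ‖y - (x - c)‖ := hxmax hx'
      have h2 := norm_add_le (v - y) (y - (x' - c))
      rw [sub_add_sub_cancel] at h2
      linarith
    rw [← gauge_lt_one_iff_mem_interior hconv h0] at this
    linarith
  set L := fderiv ℝ (gauge C) w with hL
  have key : ∀ x ∈ K, ‖y - (x - c)‖ = 1 → 0 < ‖L‖ ∧ L (y - (x - c)) = ‖L‖ := by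
    intro x hx hx1
    obtain ⟨φ, hφ, hφx⟩ := exists_dual_vector ℝ (y - (x - c)) (by rw [hx1]; norm_num)
    rw [hx1] at hφx
    simp only [RCLike.ofReal_real_eq_id, id] at hφx
    have hb : ∀ v, φ v ≤ ‖v‖ := fun v => by
      have := φ.le_opNorm v
      rw [hφ, one_mul] at this
      exact (le_abs_self _).trans this
    have hφy : 0 < φ y := by
      have h1 := hb (-(x - c))
      rw [norm_neg, map_neg] at h1
      have h2 := hr' x hx
      rw [map_sub] at hφx
      linarith
    have hCφ : ∀ v ∈ C, φ v ≤ φ y := by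
      intro v hv
      have h1 := (hb (v - (x - c))).trans (hv x hx)
      rw [map_sub] at h1 hφx
      linarith
    have hgφ : ∀ v, (φ y)⁻¹ * φ v ≤ gauge C v := by
      intro v
      refine le_of_forall_gt_imp_ge_of_dense fun t ht => ?_
      have ht0 : 0 < t := lt_of_le_of_lt (gauge_nonneg v) ht
      have h1 : t⁻¹ • v ∈ C := by
        rw [← hle, gauge_smul_of_nonneg (by positivity), smul_eq_mul, inv_mul_le_iff₀ ht0]
        linarith
      have h2 := hCφ _ h1
      rw [map_smul, smul_eq_mul, inv_mul_le_iff₀ ht0] at h2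
      rw [inv_mul_le_iff₀ hφy]
      linarith
    have hmin : IsLocalMin (fun v => gauge C v - ((φ y)⁻¹ • φ) v) w := by
      refine Filter.Eventually.of_forall fun v => ?_
      have h1 := hgφ v
      have h2 : (φ y)⁻¹ * φ w = g := by
        have h3 : φ w = g * φ y := by
          conv_lhs => rw [hwy]
          rw [map_smul, smul_eq_mul]
        rw [h3]; field_simp
      simp only [smul_apply, smul_eq_mul]
      rw [h2, ← hg]
      linarith
    have hz0 := hmin.hasFDerivAt_eq_zero
      (hwd.hasFDerivAt.sub ((φ y)⁻¹ • φ).hasFDerivAt)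
    have hLφ : L = (φ y)⁻¹ • φ := sub_eq_zero.1 hz0
    have hn : ‖L‖ = (φ y)⁻¹ := by
      rw [hLφ, norm_smul, hφ, mul_one, Real.norm_of_nonneg (by positivity)]
    refine ⟨by rw [hn]; positivity, ?_⟩
    rw [hn, hLφ, smul_apply, hφx, smul_eq_mul, mul_one]
  have hxexp : x ∈ bExp K := by
    refine ⟨c + y, fun x' hx' => ?_, ?_⟩
    · rw [mem_closedBall, dist_comm, dist_eq_norm]
      rw [show c + y - x' = y - (x' - c) by abel]
      exact hyC x' hx'
    · ext x'
      simp only [mem_inter_iff, mem_singleton_iff]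
      have e : ∀ u : E, u ∈ sphere (c + y) 1 ↔ ‖y - (u - c)‖ = 1 := fun u => by
        rw [mem_sphere, dist_comm, dist_eq_norm, show c + y - u = y - (u - c) by abel]
      rw [e]
      constructor
      · rintro ⟨hx', hx'1⟩
        obtain ⟨hp, h1⟩ := key x hx hx1
        obtain ⟨_, h2⟩ := key x' hx' hx'1
        have h3 := (le_abs_self _).trans (L.le_opNorm ((y - (x' - c)) + (y - (x - c))))
        rw [map_add, h1, h2] at h3
        have h4 : 2 ≤ ‖(y - (x' - c)) + (y - (x - c))‖ := by
          by_contra h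
          push Not at h
          nlinarith
        have h5 := norm_add_le (y - (x' - c)) (y - (x - c))
        have h6 := eq_of_norm_eq_of_norm_add_eq (hx'1.trans hx1.symm)
          (by rw [hx'1, hx1] at h5 ⊢; linarith)
        simpa using h6
      · rintro rfl
        exact ⟨hx, hx1⟩
  have hxz := hz hxexp
  rw [mem_closedBall, dist_comm, dist_eq_norm] at hxz
  have h1 : ‖w - (x - c)‖ ≤ ‖(z - c) - w‖ + 1 := by
    have := norm_sub_le (z - x) ((z - c) - w)
    rw [show z - x - (z - c - w) = w - (x - c) by abel] at this
    linarith
  have h2 : g ≤ ‖w - (x - c)‖ + (g - 1) * r := by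
    have e : g • (y - (x - c)) = (w - (x - c)) - (g - 1) • (x - c) := by
      rw [smul_sub, ← hwy, sub_smul, one_smul]; abel
    have := norm_sub_le (w - (x - c)) ((g - 1) • (x - c))
    rw [← e, norm_smul, norm_smul, hx1, Real.norm_of_nonneg hg0.le,
      Real.norm_of_nonneg (by linarith : 0 ≤ g - 1)] at this
    have h3 := mul_le_mul_of_nonneg_left (hr' x hx) (by linarith : 0 ≤ g - 1)
    linarith
  nlinarith

theorem aux_mem {E : Type*} [NormedAddCommGroup E] {S : Set E} {p : E} :
    p ∈ ballHull S ↔ ∀ y, S ⊆ closedBall y 1 → p ∈ closedBall y 1 := by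
  simp [ballHull]

theorem stmt_16 {E : Type*} [NormedAddCommGroup E] [NormedSpace ℝ E]
    [FiniteDimensional ℝ E] [Nontrivial E] [StrictConvexSpace ℝ E]
    (K : Set E) (hK : IsBConvexBody K) (hbb : circumradius K < 1)
    (S : Set E) (hS : S ⊆ K) :
    (ballHull S = K ↔ bExp K ⊆ closure S) ∧ K = ballHull (bExp K) := by
  obtain ⟨hbd, hne, hbh⟩ := hK
  have : ProperSpace E := FiniteDimensional.proper_real E
  have hcl : IsClosed K := by
    rw [← hbh]
    exact isClosed_biInter fun x _ => isClosed_closedBall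
  have hcomp : IsCompact K := Metric.isCompact_of_isClosed_isBounded hcl hbd
  have hexp : bExp K ⊆ K := by
    rintro x ⟨y, -, hy⟩
    have : x ∈ K ∩ sphere y 1 := by rw [hy]; rfl
    exact this.1
  obtain ⟨r, ⟨-, c, hc⟩, hr⟩ : ∃ r ∈ {r : ℝ | 0 ≤ r ∧ ∃ x : E, K ⊆ closedBall x r}, r < 1 := by
    refine exists_lt_of_csInf_lt ?_ hbb
    obtain ⟨R, hR⟩ := hbd.subset_closedBall (0 : E)
    exact ⟨max R 0, le_max_right _ _, 0, hR.trans (closedBall_subset_closedBall (le_max_left _ _))⟩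
  have hkey : ∀ z, bExp K ⊆ closedBall z 1 → K ⊆ closedBall z 1 :=
    fun z hz => aux_key K hcomp hne c r hr hc z hz
  have hsub : ∀ T ⊆ K, ballHull T ⊆ K := by
    intro T hT p hp
    rw [← hbh, aux_mem]
    exact fun y hy => aux_mem.1 hp y (hT.trans hy)
  refine ⟨⟨fun h x hx => ?_, fun h => ?_⟩, ?_⟩
  · obtain ⟨y, hKy, hy⟩ := hx
    have hxm : x ∈ K ∩ sphere y 1 := by rw [hy]; rfl
    by_contra hxS
    have hSK : closure S ⊆ K := closure_minimal hS hcl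
    obtain ⟨s, hs, hSs⟩ : ∃ s < 1, S ⊆ closedBall y s := by
      rcases S.eq_empty_or_nonempty with rfl | hSne
      · exact ⟨0, one_pos, empty_subset _⟩
      obtain ⟨q, hq, hqm⟩ := (hcomp.of_isClosed_subset isClosed_closure hSK).exists_isMaxOn
        hSne.closure (f := fun q => dist q y) (by fun_prop)
      refine ⟨dist q y, lt_of_le_of_ne (hKy (hSK hq)) fun he => ?_, fun u hu => hqm (subset_closure hu)⟩
      have : q ∈ K ∩ sphere y 1 := ⟨hSK hq, he⟩
      rw [hy] at this
      exact hxS (this ▸ hq)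
    have hd : ‖x - y‖ = 1 := by rw [← dist_eq_norm]; exact hxm.2
    have hxH : x ∈ ballHull S := by rw [h]; exact hxm.1
    have h1 := aux_mem.1 hxH (y - (1 - s) • (x - y)) (fun u hu => by
      have h2 := hSs hu
      rw [mem_closedBall, dist_eq_norm] at h2 ⊢
      rw [show u - (y - (1 - s) • (x - y)) = (u - y) + (1 - s) • (x - y) by abel]
      refine (norm_add_le _ _).trans ?_
      rw [norm_smul, hd, Real.norm_of_nonneg (by linarith)]
      linarith)
    rw [mem_closedBall, dist_eq_norm,
      show x - (y - (1 - s) • (x - y)) = (1 + (1 - s)) • (x - y) by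
        rw [add_smul, one_smul]; abel,
      norm_smul, hd, Real.norm_of_nonneg (by linarith)] at h1
    linarith
  · refine (hsub S hS).antisymm fun p hp => aux_mem.2 fun y hy => ?_
    exact hkey y (h.trans (closure_minimal hy isClosed_closedBall)) hp
  · exact Subset.antisymm (fun p hp => aux_mem.2 fun y hy => hkey y hy hp) (hsub _ hexp)
end

section
/- Let S be a nonempty b-bounded subset of a Minkowski space with strictly convex norm. Then b-exp(bh₁(S)) ⊆ cl(S), i.e., every b-exposed point of the ball hull of S lies in the closure of S. -/
open Metric Set

theorem stmt_17 {E : Type*} [NormedAddCommGroup E] [NormedSpace ℝ E]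
    [FiniteDimensional ℝ E] [Nontrivial E] [StrictConvexSpace ℝ E]
    (S : Set E) (hS : S.Nonempty) (hbb : circumradius S < 1) :
    bExp (ballHull S) ⊆ closure S := by
  rintro x ⟨y, hK, hx⟩
  by_contra hxS
  have hSK : S ⊆ ballHull S := fun s hs => by
    simp only [ballHull, mem_iInter, mem_setOf_eq]
    exact fun c hc => hc hs
  have hclosed : IsClosed (ballHull S) := by
    unfold ballHull
    exact isClosed_biInter fun c _ => isClosed_closedBall
  have hclK : closure S ⊆ ballHull S := closure_minimal hSK hclosed
  have hcomp : IsCompact (closure S) :=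
    (isCompact_closedBall y 1).of_isClosed_subset isClosed_closure (hclK.trans hK)
  obtain ⟨z, hz, hmax⟩ := hcomp.exists_isMaxOn hS.closure
    (f := fun p => dist p y) (by fun_prop)
  have hxm : x ∈ ballHull S ∩ sphere y 1 := by rw [hx]; rfl
  have hz1 : dist z y < 1 := by
    refine lt_of_le_of_ne (hK (hclK hz)) fun h => hxS ?_
    have hz' : z ∈ ballHull S ∩ sphere y 1 := ⟨hclK hz, h⟩
    rw [hx] at hz'
    rwa [← (mem_singleton_iff.1 hz')]
  set r := dist z y with hr
  have hn : ‖x - y‖ = 1 := by rw [← dist_eq_norm]; exact hxm.2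
  have hsub : S ⊆ closedBall (y - (1 - r) • (x - y)) 1 := by
    intro s hs
    have h1 : dist s y ≤ r := hmax (subset_closure hs)
    rw [dist_eq_norm] at h1
    rw [mem_closedBall, dist_eq_norm]
    have e : s - (y - (1 - r) • (x - y)) = (s - y) + (1 - r) • (x - y) := by abel
    rw [e]
    refine (norm_add_le _ _).trans ?_
    rw [norm_smul, hn, Real.norm_of_nonneg (by linarith)]
    linarith
  have hxK : x ∈ closedBall (y - (1 - r) • (x - y)) 1 := by
    have := hxm.1
    simp only [ballHull, mem_iInter, mem_setOf_eq] at this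
    exact this _ hsub
  rw [mem_closedBall, dist_eq_norm] at hxK
  have e : x - (y - (1 - r) • (x - y)) = (2 - r) • (x - y) := by module
  rw [e, norm_smul, hn, Real.norm_of_nonneg (by linarith)] at hxK
  linarith
end

section
/- If a b-convex body K in a Minkowski space is not b-bounded (i.e., rad(K) = 1), then K has no b-exposed points: b-exp(K) = ∅. -/
open Metric Set

theorem stmt_18 {E : Type*} [NormedAddCommGroup E] [NormedSpace ℝ E]
    [FiniteDimensional ℝ E] [Nontrivial E]
    (K : Set E) (hK : IsBConvexBody K) (hbb : ¬ circumradius K < 1) :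
    bExp K = ∅ := by
  obtain ⟨hbd, _, hhull⟩ := hK
  by_contra hne
  obtain ⟨x, y, hKy, hx⟩ := Set.nonempty_iff_ne_empty.mpr hne
  apply hbb
  have hclosed : IsClosed K := by
    rw [← hhull]
    exact isClosed_biInter fun _ _ => isClosed_closedBall
  have hcomp : IsCompact (K \ ball x (1/2)) :=
    (Metric.isCompact_of_isClosed_isBounded hclosed hbd).diff isOpen_ball
  have hxs : x ∈ K ∩ sphere y 1 := by rw [hx]; rfl
  have hxy : ‖x - y‖ = 1 := by simpa [dist_eq_norm] using hxs.2
  have hz1 : ∀ z ∈ K, ‖z - y‖ ≤ 1 := fun z hz => by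
    simpa [dist_eq_norm] using hKy hz
  have hm : ∃ m : ℝ, 0 ≤ m ∧ m < 1 ∧ ∀ z ∈ K \ ball x (1/2), ‖z - y‖ ≤ m := by
    rcases (K \ ball x (1/2)).eq_empty_or_nonempty with h | h
    · exact ⟨0, le_rfl, one_pos, fun z hz => absurd (h ▸ hz) (Set.notMem_empty z)⟩
    · obtain ⟨w, hw, hmax⟩ := hcomp.exists_isMaxOn h
        (f := fun z => ‖z - y‖) (by fun_prop)
      refine ⟨‖w - y‖, norm_nonneg _, lt_of_le_of_ne (hz1 w hw.1) ?_, fun z hz => hmax hz⟩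
      intro he
      have : w ∈ K ∩ sphere y 1 := ⟨hw.1, by simpa [dist_eq_norm] using he⟩
      rw [hx] at this
      have hwx : w = x := this
      exact hw.2 (by simp [hwx])
  obtain ⟨m, hm0, hm1, hm⟩ := hm
  obtain ⟨t, ht⟩ : ∃ t : ℝ, t = (1 - m) / 4 := ⟨_, rfl⟩
  have hkey : ∀ z ∈ K, ‖z - (y + t • (x - y))‖ ≤ 1 - t / 2 := by
    intro z hz
    have e : z - (y + t • (x - y)) = (1 - t) • (z - y) + t • (z - x) := by module
    have h1 : ‖z - (y + t • (x - y))‖ ≤ (1 - t) * ‖z - y‖ + t * ‖z - x‖ := by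
      rw [e]
      refine (norm_add_le _ _).trans (le_of_eq ?_)
      rw [norm_smul, norm_smul, Real.norm_of_nonneg (by linarith), Real.norm_of_nonneg (by linarith)]
    by_cases hzx : z ∈ ball x (1/2)
    · have h2 : ‖z - x‖ < 1/2 := by simpa [dist_eq_norm] using hzx
      have h3 := hz1 z hz
      nlinarith
    · have h2 := hm z ⟨hz, hzx⟩
      have h3 : ‖z - x‖ ≤ 2 := by
        have := norm_sub_le (z - y) (x - y)
        rw [sub_sub_sub_cancel_right] at this
        linarith [hz1 z hz]
      have h4 := norm_nonneg (z - y)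
      nlinarith
  have hle : circumradius K ≤ 1 - t / 2 := by
    apply csInf_le ⟨0, fun r hr => hr.1⟩
    refine ⟨by linarith, y + t • (x - y), fun z hz => ?_⟩
    rw [mem_closedBall, dist_eq_norm]
    exact hkey z hz
  linarith
end

section
/- Let C be a complete set of diameter 1 in a Minkowski space and let K ⊆ C be a compact convex nonempty set. Then the following are equivalent: (I) C is the unique completion of K; (II) bh₁(K) = C; (III) K meets every exposed b-face of C. If, in addition, the norm is strictly convex, these are also equivalent to (IV) cl(conv(b-exp(C))) ⊆ K. -/
open Metric Set

/-- A complete (diametrically maximal) set: bounded, nonempty, and adding any outside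
point strictly increases the diameter. -/
def IsDiamComplete {E : Type*} [NormedAddCommGroup E] (C : Set E) : Prop :=
  Bornology.IsBounded C ∧ C.Nonempty ∧ ∀ x ∉ C, Metric.diam C < Metric.diam (C ∪ {x})

/-- `C` is a completion of `S`: `C` is complete, contains `S`, and has the same diameter. -/
def IsCompletion {E : Type*} [NormedAddCommGroup E] (C S : Set E) : Prop :=
  IsDiamComplete C ∧ S ⊆ C ∧ Metric.diam C = Metric.diam S

section Helpers

theorem aux_dist_le {E : Type*} [NormedAddCommGroup E] {C : Set E} (hC : IsDiamComplete C)
    (hdiam : Metric.diam C = 1) {x y : E} (hx : x ∈ C) (hy : y ∈ C) : dist x y ≤ 1 :=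
  hdiam ▸ Metric.dist_le_diam_of_mem hC.1 hx hy

theorem aux_mem_s19 {E : Type*} [NormedAddCommGroup E] {C : Set E} (hC : IsDiamComplete C)
    (hdiam : Metric.diam C = 1) (x : E) : x ∈ C ↔ ∀ c ∈ C, dist x c ≤ 1 := by
  refine ⟨fun hx c hc => aux_dist_le hC hdiam hx hc, fun h => ?_⟩
  by_contra hx
  have h1 := hC.2.2 x hx
  have h2 : Metric.diam (C ∪ {x}) ≤ 1 := by
    refine Metric.diam_le_of_forall_dist_le zero_le_one ?_
    rintro a (ha | rfl) b (hb | rfl)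
    · exact aux_dist_le hC hdiam ha hb
    · rw [dist_comm]; exact h a ha
    · exact h b hb
    · simp
  linarith

theorem aux_inter_s19 {E : Type*} [NormedAddCommGroup E] {C : Set E}
    (H : ∀ x, x ∈ C ↔ ∀ c ∈ C, dist x c ≤ 1) : C = ⋂ c ∈ C, closedBall c 1 := by
  ext x
  simp only [mem_iInter, mem_closedBall]
  exact H x

theorem aux_far {E : Type*} [NormedAddCommGroup E] {K : Set E} (hK : IsCompact K)
    (hne : K.Nonempty) {y : E} (h : ∀ k ∈ K, dist y k < 1) :
    ∃ d : ℝ, 0 ≤ d ∧ d < 1 ∧ ∀ k ∈ K, dist y k ≤ d := by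
  obtain ⟨k, hk, hmax⟩ := hK.exists_isMaxOn hne
    (f := fun k => dist y k) (by fun_prop)
  exact ⟨dist y k, dist_nonneg, h k hk, fun k' hk' => hmax hk'⟩

theorem aux_A {E : Type*} [NormedAddCommGroup E] [NormedSpace ℝ E] {C : Set E}
    (hd : ∀ p ∈ C, ∀ q ∈ C, dist p q ≤ 1) {d : ℝ} (hd0 : 0 ≤ d) (hd1 : d ≤ 1) {x : E}
    (hx : closedBall x (1 - d) ⊆ C) : ∀ q ∈ C, dist x q ≤ d := by
  intro q hq
  by_cases hxq : x = q
  · simpa [hxq] using hd0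
  have hpos : 0 < ‖x - q‖ := norm_pos_iff.2 (sub_ne_zero.2 hxq)
  set z : E := x + ((1 - d) / ‖x - q‖) • (x - q) with hz
  have hzC : z ∈ C := by
    apply hx
    rw [mem_closedBall, dist_eq_norm, hz, add_sub_cancel_left, norm_smul, norm_div, norm_norm,
      Real.norm_eq_abs, abs_of_nonneg (by linarith), div_mul_cancel₀ _ hpos.ne']
  have h1 := hd z hzC q hq
  have h2 : z - q = (1 + (1 - d) / ‖x - q‖) • (x - q) := by
    rw [hz]; module
  have h3 : 0 ≤ (1 - d) / ‖x - q‖ := div_nonneg (by linarith) hpos.le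
  rw [dist_eq_norm, h2, norm_smul, Real.norm_eq_abs, abs_of_nonneg (by linarith), add_mul,
    div_mul_cancel₀ _ hpos.ne'] at h1
  rw [dist_eq_norm]
  linarith

theorem aux_ball {E : Type*} [NormedAddCommGroup E] {K : Set E} {d : ℝ} {y : E}
    (h : ∀ k ∈ K, dist y k ≤ d) {z : E} (hz : z ∈ closedBall y (1 - d)) :
    ∀ k ∈ K, dist z k ≤ 1 := by
  intro k hk
  have := dist_triangle z y k
  have := h k hk
  rw [mem_closedBall] at hz
  linarith

theorem aux_center_s19 {E : Type*} [NormedAddCommGroup E] [NormedSpace ℝ E] {C : Set E}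
    (hC : IsCompact C) (hne : C.Nonempty)
    (hd : ∀ p ∈ C, ∀ q ∈ C, dist p q ≤ 1) :
    ∃ y : E, ∃ d : ℝ, 0 ≤ d ∧ d < 1 ∧ ∀ c ∈ C, dist y c ≤ d := by
  obtain ⟨t, htC, htf, hcov⟩ := hC.finite_cover_balls (e := 1 / 2) (by norm_num)
  lift t to Finset E using htf
  have htne : t.Nonempty := by
    obtain ⟨c, hc⟩ := hne
    have := hcov hc
    simp only [mem_iUnion] at this
    obtain ⟨i, hi, _⟩ := this
    exact ⟨i, by simpa using hi⟩
  have hn : (0 : ℝ) < t.card := by exact_mod_cast htne.card_pos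
  set y : E := (t.card : ℝ)⁻¹ • ∑ i ∈ t, i with hy
  refine ⟨y, ?_⟩
  refine aux_far hC hne (fun c hc => ?_)
  have h1 : y - c = (t.card : ℝ)⁻¹ • ∑ i ∈ t, (i - c) := by
    rw [Finset.sum_sub_distrib, Finset.sum_const, smul_sub, ← hy, ← Nat.cast_smul_eq_nsmul ℝ,
      smul_smul, inv_mul_cancel₀ hn.ne', one_smul]
  have h2 : ∑ i ∈ t, ‖i - c‖ < ∑ i ∈ t, (1 : ℝ) := by
    refine Finset.sum_lt_sum (fun i hi => ?_) ?_
    · rw [← dist_eq_norm]; exact hd i (htC (by simpa using hi)) c hc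
    · have := hcov hc
      simp only [mem_iUnion] at this
      obtain ⟨i, hi, hi2⟩ := this
      refine ⟨i, by simpa using hi, ?_⟩
      rw [← dist_eq_norm, dist_comm]
      rw [mem_ball] at hi2
      linarith
  rw [dist_eq_norm, h1, norm_smul, norm_inv, Real.norm_eq_abs, abs_of_pos hn]
  have h3 := (norm_sum_le t (fun i => i - c)).trans_lt h2
  rw [Finset.sum_const, nsmul_eq_mul, mul_one] at h3
  rw [inv_mul_lt_iff₀ hn]
  linarith

theorem aux_seg {E : Type*} [NormedAddCommGroup E] [NormedSpace ℝ E] {C : Set E}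
    (hC : IsCompact C) (hne : C.Nonempty)
    (H : ∀ x, x ∈ C ↔ ∀ c ∈ C, dist x c ≤ 1) {y0 x : E} (hy0 : y0 ∈ interior C) (hx : x ∉ C) :
    ∃ b : ℝ, 0 ≤ b ∧ b < 1 ∧ y0 + b • (x - y0) ∈ C ∧
      ∃ c ∈ C, dist (y0 + b • (x - y0)) c = 1 := by
  have hex : ∃ y ∈ segment ℝ y0 x, y ∈ C ∧ y ∉ interior C := by
    by_contra hcon
    push Not at hcon
    obtain ⟨z, _, hz1, hz2⟩ := (convex_segment (𝕜 := ℝ) y0 x).isPreconnected (interior C) Cᶜ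
      isOpen_interior hC.isClosed.isOpen_compl
      (fun z hz => by
        by_cases hzC : z ∈ C
        · exact Or.inl (hcon z hz hzC)
        · exact Or.inr hzC)
      ⟨y0, left_mem_segment ℝ y0 x, hy0⟩ ⟨x, right_mem_segment ℝ y0 x, hx⟩
    exact hz2 (interior_subset hz1)
  obtain ⟨y, hy, hyC, hyi⟩ := hex
  rw [segment_eq_image'] at hy
  obtain ⟨b, ⟨hb0, hb1⟩, rfl⟩ := hy
  refine ⟨b, hb0, ?_, hyC, ?_⟩
  · refine lt_of_le_of_ne hb1 ?_
    rintro rfl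
    apply hx
    simpa using hyC
  · by_contra hcon
    push Not at hcon
    obtain ⟨d, hd0, hd1, hd⟩ := aux_far hC hne
      (fun c hc => lt_of_le_of_ne ((H _).1 hyC c hc) (hcon c hc))
    apply hyi
    rw [mem_interior_iff_mem_nhds]
    exact Filter.mem_of_superset (closedBall_mem_nhds _ (sub_pos.2 hd1))
      (fun z hz => (H z).2 (aux_ball hd hz))

theorem aux_interior {E : Type*} [NormedAddCommGroup E] {C : Set E}
    (H : ∀ x, x ∈ C ↔ ∀ c ∈ C, dist x c ≤ 1) {y0 : E} {d : ℝ} (hd1 : d < 1)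
    (hd : ∀ c ∈ C, dist y0 c ≤ d) : y0 ∈ interior C := by
  rw [mem_interior_iff_mem_nhds]
  exact Filter.mem_of_superset (closedBall_mem_nhds _ (sub_pos.2 hd1))
      (fun z hz => (H z).2 (aux_ball hd hz))

theorem aux_comb {E : Type*} [NormedAddCommGroup E] [NormedSpace ℝ E] {y0 x k : E} {b : ℝ}
    (hb0 : 0 ≤ b) (hb1 : b ≤ 1) :
    dist (y0 + b • (x - y0)) k ≤ (1 - b) * dist y0 k + b * dist x k := by
  have h : y0 + b • (x - y0) - k = (1 - b) • (y0 - k) + b • (x - k) := by module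
  rw [dist_eq_norm, h]
  refine (norm_add_le _ _).trans ?_
  rw [norm_smul, norm_smul, Real.norm_eq_abs, Real.norm_eq_abs, abs_of_nonneg hb0,
    abs_of_nonneg (by linarith), dist_eq_norm, dist_eq_norm]

/-- Norming functional at a boundary point gives a linear lower bound of the gauge. -/
theorem aux_support {E : Type*} [NormedAddCommGroup E] [NormedSpace ℝ E]
    {C : Set E} (hd : ∀ p ∈ C, ∀ q ∈ C, dist p q ≤ 1) {y0 v : E} {b : ℝ} (hb : 0 ≤ b)
    (hs : {u : E | y0 + u ∈ C} ∈ nhds (0 : E))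
    (hy : y0 + b • v ∈ C) {c : E} (hc : c ∈ C) (hyc : dist (y0 + b • v) c = 1)
    (hdiff : DifferentiableAt ℝ (gauge {u : E | y0 + u ∈ C}) v) :
    ∃ φ : StrongDual ℝ E, ∃ m : ℝ, 0 < m ∧ ‖φ‖ = 1 ∧ φ (y0 + b • v - c) = 1 ∧
      φ = m • fderiv ℝ (gauge {u : E | y0 + u ∈ C}) v := by
  set s : Set E := {u : E | y0 + u ∈ C} with hsdef
  have hyc' : ‖y0 + b • v - c‖ = 1 := by rw [← dist_eq_norm]; exact hyc
  obtain ⟨φ, hφ1, hφ2⟩ := exists_dual_vector ℝ (y0 + b • v - c) (by rw [hyc']; norm_num)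
  rw [hyc'] at hφ2
  have hφ2 : φ (y0 + b • v - c) = 1 := by simpa using hφ2
  have hle : ∀ u ∈ s, φ u ≤ φ (b • v) := by
    intro u hu
    have h1 : φ (y0 + u - c) ≤ 1 := by
      refine (le_abs_self _).trans ((φ.le_opNorm _).trans ?_)
      rw [hφ1, one_mul, ← dist_eq_norm]
      exact hd _ hu _ hc
    simp only [map_add, map_sub] at h1 hφ2
    linarith
  have habs : Absorbent ℝ s := absorbent_nhds_zero hs
  have hm : 0 < φ (b • v) := by
    have hne : φ ≠ 0 := by
      rintro rfl
      simp at hφ1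
    obtain ⟨w, hw⟩ : ∃ w, 0 < φ w := by
      by_contra hcon
      push Not at hcon
      apply hne
      ext w
      have h1 := hcon w
      have h2 := hcon (-w)
      rw [map_neg] at h2
      simp only [ContinuousLinearMap.zero_apply]
      linarith
    obtain ⟨t, ht, _, htw⟩ := exists_lt_of_gauge_lt habs (lt_add_one (gauge s w))
    obtain ⟨u, hu, rfl⟩ := htw
    have h1 := hle u hu
    have h2 : φ (t • u) = t * φ u := by simp
    simp only [h2] at hw
    exact (pos_of_mul_pos_right hw ht.le).trans_le h1
  have hgauge : ∀ u, φ u ≤ φ (b • v) * gauge s u := by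
    intro w
    rw [mul_comm, ← div_le_iff₀ hm]
    refine le_of_forall_gt_imp_ge_of_dense (fun a ha => ?_)
    obtain ⟨t, ht, hta, htw⟩ := exists_lt_of_gauge_lt habs ha
    obtain ⟨u, hu, rfl⟩ := htw
    have h1 := hle u hu
    have h2 : φ (t • u) = t * φ u := by simp
    simp only [h2]
    rw [div_le_iff₀ hm]
    nlinarith
  have hgv : φ v = φ (b • v) * gauge s v := by
    refine le_antisymm (hgauge v) ?_
    have h1 : gauge s (b • v) ≤ 1 := gauge_le_one_of_mem hy
    rw [gauge_smul_of_nonneg hb, smul_eq_mul] at h1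
    have h2 : φ (b • v) = b * φ v := by simp
    rw [h2] at hm ⊢
    have h3 : 0 < φ v := pos_of_mul_pos_right hm hb
    nlinarith
  refine ⟨φ, φ (b • v), hm, hφ1, hφ2, ?_⟩
  have hF : HasFDerivAt (fun u => φ (b • v) * gauge s u - φ u)
      (φ (b • v) • fderiv ℝ (gauge s) v - φ) v :=
    (hdiff.hasFDerivAt.const_mul _).sub φ.hasFDerivAt
  have hmin : IsLocalMin (fun u => φ (b • v) * gauge s u - φ u) v := by
    refine Filter.Eventually.of_forall (fun u => ?_)
    simp only
    rw [← hgv, sub_self]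
    linarith [hgauge u]
  exact (sub_eq_zero.1 (hmin.hasFDerivAt_eq_zero hF)).symm

theorem aux_strict {E : Type*} [NormedAddCommGroup E] [NormedSpace ℝ E] [StrictConvexSpace ℝ E]
    {C : Set E} (hd : ∀ p ∈ C, ∀ q ∈ C, dist p q ≤ 1) {y0 v : E} {b : ℝ} (hb : 0 ≤ b)
    (hs : {u : E | y0 + u ∈ C} ∈ nhds (0 : E))
    (hy : y0 + b • v ∈ C) 
    (hdiff : DifferentiableAt ℝ (gauge {u : E | y0 + u ∈ C}) v)
    {c : E} (hc : c ∈ C) (hyc : dist (y0 + b • v) c = 1)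
    {c' : E} (hc' : c' ∈ C) (hyc' : dist (y0 + b • v) c' = 1) : c' = c := by
  obtain ⟨φ, m, hm, h1, h2, h3⟩ := aux_support hd hb hs hy hc hyc hdiff
  obtain ⟨ψ, n, hn, k1, k2, k3⟩ := aux_support hd hb hs hy hc' hyc' hdiff
  set L := fderiv ℝ (gauge {u : E | y0 + u ∈ C}) v
  have hmn : m = n := by
    rw [h3, norm_smul, Real.norm_eq_abs, abs_of_pos hm] at h1
    rw [k3, norm_smul, Real.norm_eq_abs, abs_of_pos hn] at k1
    have hL : ‖L‖ ≠ 0 := by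
      intro h; rw [h] at h1; simp at h1
    exact mul_right_cancel₀ hL (h1.trans k1.symm)
  have hφψ : φ = ψ := by rw [h3, k3, hmn]
  subst hφψ
  rw [dist_eq_norm] at hyc hyc'
  have : y0 + b • v - c' = y0 + b • v - c := by
    refine eq_of_norm_eq_of_norm_add_eq (hyc'.trans hyc.symm) ?_
    refine le_antisymm (norm_add_le _ _) ?_
    have h4 := (le_abs_self _).trans (φ.le_opNorm ((y0 + b • v - c') + (y0 + b • v - c)))
    rw [h1, one_mul, map_add, h2, k2] at h4
    rw [hyc, hyc']
    exact h4
  exact sub_right_injective this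

theorem aux_exists_diff {E : Type*} [NormedAddCommGroup E] [NormedSpace ℝ E]
    [FiniteDimensional ℝ E] {s : Set E} (hs : Convex ℝ s) (h0 : s ∈ nhds (0 : E)) :
    Dense {v : E | DifferentiableAt ℝ (gauge s) v} := by
  borelize E
  obtain ⟨K, hK⟩ := hs.lipschitz_gauge h0
  exact MeasureTheory.Measure.dense_of_ae
    (hK.ae_differentiableAt (μ := (MeasureTheory.Measure.addHaar : MeasureTheory.Measure E)))

theorem aux_zorn {E : Type*} [NormedAddCommGroup E] {S : Set E} (hne : S.Nonempty)
    (hd : ∀ p ∈ S, ∀ q ∈ S, dist p q ≤ 1) (hS : Metric.diam S = 1) :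
    ∃ D : Set E, S ⊆ D ∧ IsDiamComplete D ∧ Metric.diam D = 1 := by
  obtain ⟨D, hSD, hD⟩ := zorn_subset_nonempty
    {T : Set E | ∀ p ∈ T, ∀ q ∈ T, dist p q ≤ 1} (by
      intro c hc hchain hcne
      refine ⟨⋃₀ c, ?_, fun s hs => subset_sUnion_of_mem hs⟩
      rintro p ⟨s, hs, hp⟩ q ⟨t, ht, hq⟩
      rcases hchain.total hs ht with h | h
      · exact hc ht p (h hp) q hq
      · exact hc hs p hp q (h hq)) S hd
  have hDd : ∀ p ∈ D, ∀ q ∈ D, dist p q ≤ 1 := hD.prop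
  have hbdd : Bornology.IsBounded D := Metric.isBounded_iff.2 ⟨1, fun p hp q hq => hDd p hp q hq⟩
  have hdiam : Metric.diam D = 1 :=
    le_antisymm (Metric.diam_le_of_forall_dist_le zero_le_one hDd)
      (hS ▸ Metric.diam_mono hSD hbdd)
  refine ⟨D, hSD, ⟨hbdd, hne.mono hSD, ?_⟩, hdiam⟩
  intro x hx
  by_contra hcon
  push Not at hcon
  rw [hdiam] at hcon
  have hb2 : Bornology.IsBounded (D ∪ {x}) := hbdd.union Bornology.isBounded_singleton
  have hmem : (D ∪ {x}) ∈ {T : Set E | ∀ p ∈ T, ∀ q ∈ T, dist p q ≤ 1} :=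
    fun p hp q hq => (Metric.dist_le_diam_of_mem hb2 hp hq).trans hcon
  exact hx (hD.le_of_ge hmem subset_union_left (Or.inr rfl))

theorem aux_hull_s19 {E : Type*} [NormedAddCommGroup E] {C K : Set E}
    (H : ∀ x, x ∈ C ↔ ∀ c ∈ C, dist x c ≤ 1) (hKC : K ⊆ C) :
    ballHull K = C ↔ ∀ x, (∀ k ∈ K, dist x k ≤ 1) → x ∈ C := by
  constructor
  · intro h x hx
    rw [H]
    intro c hc
    rw [← h] at hc
    simp only [ballHull, mem_iInter, mem_setOf_eq] at hc
    have := hc x (fun k hk => by rw [mem_closedBall, dist_comm]; exact hx k hk)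
    rwa [mem_closedBall, dist_comm] at this
  · intro h
    ext z
    simp only [ballHull, mem_iInter, mem_setOf_eq, mem_closedBall]
    constructor
    · intro hz
      rw [H]
      intro c hc
      refine hz c (fun k hk => ?_)
      rw [mem_closedBall]
      exact (H k).1 (hKC hk) c hc
    · intro hz x hx
      refine (H z).1 hz x (h x fun k hk => ?_)
      rw [dist_comm]
      exact hx hk

end Helpers

theorem stmt_19 {E : Type*} [NormedAddCommGroup E] [NormedSpace ℝ E]
    [FiniteDimensional ℝ E] [Nontrivial E]
    (C : Set E) (hC : IsDiamComplete C) (hdiam : Metric.diam C = 1)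
    (K : Set E) (hKC : K ⊆ C) (hKc : IsCompact K) (hKconv : Convex ℝ K)
    (hKne : K.Nonempty) :
    ((IsCompletion C K ∧ ∀ C' : Set E, IsCompletion C' K → C' = C) ↔ ballHull K = C) ∧
    (ballHull K = C ↔ ∀ F : Set E, IsExposedBFace C F → (K ∩ F).Nonempty) ∧
    (StrictConvexSpace ℝ E →
      (ballHull K = C ↔ closure (convexHull ℝ (bExp C)) ⊆ K)) := by
  have hd : ∀ p ∈ C, ∀ q ∈ C, dist p q ≤ 1 := fun p hp q hq => aux_dist_le hC hdiam hp hq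
  have H := aux_mem_s19 hC hdiam
  have hCclosed : IsClosed C := by
    rw [aux_inter_s19 H]
    exact isClosed_biInter fun _ _ => isClosed_closedBall
  have hCconv : Convex ℝ C := by
    rw [aux_inter_s19 H]
    exact convex_iInter₂ fun c _ => convex_closedBall c 1
  have hCc : IsCompact C := Metric.isCompact_of_isClosed_isBounded hCclosed hC.1
  have hCne := hC.2.1
  obtain ⟨y0, d0, hd00, hd01, hy0⟩ := aux_center_s19 hCc hCne hd
  have hy0i := aux_interior H hd01 hy0
  rw [aux_hull_s19 H hKC]
  have hI : (IsCompletion C K ∧ ∀ C' : Set E, IsCompletion C' K → C' = C) ↔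
      ∀ x, (∀ k ∈ K, dist x k ≤ 1) → x ∈ C := by
    constructor
    · rintro ⟨⟨_, _, hKd⟩, huniq⟩ x hx
      rw [hdiam] at hKd
      have hpair : ∀ p ∈ K ∪ {x}, ∀ q ∈ K ∪ {x}, dist p q ≤ 1 := by
        rintro a (ha | rfl) b (hb | rfl)
        · exact hd a (hKC ha) b (hKC hb)
        · rw [dist_comm]; exact hx a ha
        · exact hx b hb
        · simp
      have hdx : Metric.diam (K ∪ {x}) = 1 := by
        refine le_antisymm (Metric.diam_le_of_forall_dist_le zero_le_one hpair) ?_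
        rw [hKd]
        exact Metric.diam_mono subset_union_left
          (hKc.isBounded.union Bornology.isBounded_singleton)
      obtain ⟨D, hD1, hD2, hD3⟩ := aux_zorn (hKne.mono subset_union_left) hpair hdx
      have := huniq D ⟨hD2, subset_union_left.trans hD1, by rw [hD3, ← hKd]⟩
      rw [← this]
      exact hD1 (Or.inr rfl)
    · intro h
      have hKd : Metric.diam K = 1 := by
        have hle : Metric.diam K ≤ 1 := hdiam ▸ Metric.diam_mono hKC hC.1
        by_contra hne
        have hlt : Metric.diam K < 1 := lt_of_le_of_ne hle hne
        have h0 : 0 ≤ Metric.diam K := Metric.diam_nonneg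
        have key : ∀ p, (∀ k ∈ K, dist p k ≤ Metric.diam K) → ∀ q ∈ C,
            dist p q ≤ Metric.diam K := fun p hp =>
          aux_A hd h0 hle (fun z hz => h z (aux_ball hp hz))
        have h2 : ∀ p ∈ C, ∀ q ∈ C, dist p q ≤ Metric.diam K := by
          intro p hp
          refine key p (fun k hk => ?_)
          rw [dist_comm]
          exact key k (fun k' hk' => Metric.dist_le_diam_of_mem hKc.isBounded hk hk') p hp
        have := Metric.diam_le_of_forall_dist_le h0 h2
        linarith
      refine ⟨⟨hC, hKC, hdiam.trans hKd.symm⟩, ?_⟩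
      rintro D ⟨hD, hKD, hDd⟩
      rw [hKd] at hDd
      have hDC : D ⊆ C := fun x hx => h x (fun k hk => aux_dist_le hD hDd hx (hKD hk))
      refine subset_antisymm hDC (fun x hx => ?_)
      rw [aux_mem_s19 hD hDd]
      exact fun c hc => hd x hx c (hDC hc)
  have hIII : (∀ x, (∀ k ∈ K, dist x k ≤ 1) → x ∈ C) ↔
      ∀ F : Set E, IsExposedBFace C F → (K ∩ F).Nonempty := by
    constructor
    · rintro h F ⟨y, hy, ⟨c, hc, hyc⟩, rfl⟩
      by_contra hcon
      have hlt : ∀ k ∈ K, dist y k < 1 := by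
        intro k hk
        have h1 := hy (hKC hk)
        rw [mem_closedBall, dist_comm] at h1
        refine lt_of_le_of_ne h1 (fun h2 => hcon ⟨k, hk, hKC hk, ?_⟩)
        rw [mem_sphere, dist_comm]; exact h2
      obtain ⟨d, h0, h1, h2⟩ := aux_far hKc hKne hlt
      have h3 := aux_A hd h0 h1.le (fun z hz => h z (aux_ball h2 hz)) c hc
      rw [mem_sphere, dist_comm] at hyc
      linarith
    · intro h x hx
      by_contra hxC
      obtain ⟨b, hb0, hb1, hyC, c, hc, hyc⟩ := aux_seg hCc hCne H hy0i hxC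
      obtain ⟨k, hk, _, hks⟩ := h (C ∩ sphere (y0 + b • (x - y0)) 1)
        ⟨y0 + b • (x - y0), fun z hz => hd z hz _ hyC,
          ⟨c, hc, by rw [mem_sphere, dist_comm]; exact hyc⟩, rfl⟩
      rw [mem_sphere, dist_comm] at hks
      have h1 := aux_comb (y0 := y0) (x := x) (k := k) hb0 hb1.le
      have h2 := hy0 k (hKC hk)
      have h3 := hx k hk
      nlinarith
  refine ⟨hI, hIII, fun hstrict => ⟨fun h => ?_, fun h => ?_⟩⟩
  · rw [hIII] at h
    refine closure_minimal (convexHull_min ?_ hKconv) hKc.isClosed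
    rintro x ⟨y, hy, hyx⟩
    obtain ⟨k, hk, hk2⟩ := h {x} ⟨y, hy, by rw [hyx]; exact singleton_nonempty x, hyx.symm⟩
    rw [mem_singleton_iff] at hk2
    exact hk2 ▸ hk
  · have hexp : bExp C ⊆ K := ((subset_convexHull ℝ _).trans subset_closure).trans h
    intro x hx
    by_contra hxC
    have hs : {u : E | y0 + u ∈ C} ∈ nhds (0 : E) := by
      have : Filter.Tendsto (fun u : E => y0 + u) (nhds 0) (nhds y0) := by
        have h1 : Continuous (fun u : E => y0 + u) := by fun_prop
        simpa using h1.tendsto 0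
      exact this (mem_interior_iff_mem_nhds.1 hy0i)
    have hsconv : Convex ℝ {u : E | y0 + u ∈ C} := hCconv.translate_preimage_right y0
    have hdense := aux_exists_diff hsconv hs
    -- a nonempty open set of points outside `C`, within distance one of `K`
    have hnear : ∃ e : ℝ, 0 < e ∧ e ≤ 1 ∧ x + e • (y0 - x) ∉ C := by
      have h1 : Filter.Tendsto (fun e : ℝ => x + e • (y0 - x)) (nhdsWithin 0 (Ioi 0)) (nhds x) := by
        have h1 : Continuous (fun e : ℝ => x + e • (y0 - x)) := by fun_prop
        have h2 := h1.tendsto 0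
        simp only [zero_smul, add_zero] at h2
        exact h2.mono_left nhdsWithin_le_nhds
      have h2 := h1.eventually (hCclosed.isOpen_compl.mem_nhds hxC)
      have h3 : ∀ᶠ e : ℝ in nhdsWithin 0 (Ioi 0), e ∈ Ioc (0 : ℝ) 1 :=
        Ioc_mem_nhdsGT one_pos
      obtain ⟨e, he1, he2⟩ := (h2.and h3).exists
      exact ⟨e, he2.1, he2.2, he1⟩
    obtain ⟨e, he0, he1, hex2⟩ := hnear
    set x2 := x + e • (y0 - x) with hx2
    have hρ : 0 < e * (1 - d0) := mul_pos he0 (by linarith)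
    have hx2K : ∀ k ∈ K, dist x2 k ≤ 1 - e * (1 - d0) := by
      intro k hk
      have h1 := aux_comb (y0 := x) (x := y0) (k := k) he0.le he1
      have h2 := hy0 k (hKC hk)
      have h3 := hx k hk
      rw [← hx2] at h1
      nlinarith
    have hVo : IsOpen {v : E | y0 + v ∈ ball x2 (e * (1 - d0)) ∩ Cᶜ} :=
      (isOpen_ball.inter hCclosed.isOpen_compl).preimage (by fun_prop)
    obtain ⟨v, hv1, hv2⟩ := hdense.inter_open_nonempty _ hVo
      ⟨x2 - y0, by simpa using ⟨hρ, hex2⟩⟩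
    obtain ⟨hvb, hvC⟩ := hv1
    obtain ⟨b, hb0, hb1, hyC, c, hc, hyc⟩ := aux_seg hCc hCne H hy0i hvC
    have hcomb := aux_comb (y0 := y0) (x := y0 + v) (k := c) hb0 hb1.le
    rw [add_sub_cancel_left] at hyC hyc hcomb
    have hcK : c ∈ K := by
      refine hexp ⟨y0 + b • v, fun z hz => hd z hz _ hyC, ?_⟩
      ext c'
      rw [mem_singleton_iff]
      constructor
      · rintro ⟨hc', hs'⟩
        rw [mem_sphere, dist_comm] at hs'
        exact aux_strict hd hb0 hs hyC hv2 hc hyc hc' hs'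
      · rintro rfl
        exact ⟨hc, by rw [mem_sphere, dist_comm]; exact hyc⟩
    have h1 := hx2K c hcK
    have h2 := hy0 c hc
    have h3 := dist_triangle (y0 + v) x2 c
    rw [mem_ball] at hvb
    nlinarith
end
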